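/- arXiv:2301.03332 — 5 statements merged into one kernel-verified Lean document; each statement's English description precedes it below -/
import Mathlib

section
/- (Theorem 1.2, extremality of U.) The integrals ∫ |∇_G U|² dx dt and ∫ U^{2Q/(Q-2)} dx dt are finite and positive, and equality holds in the sharp Folland–Stein inequality for U: ∫ |∇_G U|² dx dt = S_{m,n} (∫ U^{2Q/(Q-2)} dx dt)^{(Q-2)/Q}, where S_{m,n} = 4^{-2n/Q} · m(Q-2) · π^{(m+n)/Q} · (Γ((m+n)/2)/Γ(m+n))^{2/Q}. -/
/-!
Write `F = (1 + |x|²/4)² + |t|²`, so `U = F^{-(Q-2)/4}` and `U^{2Q/(Q-2)} = F^{-Q/2}`. The H-type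
relations give `|∇_G F|² = |x|² F` (`sum_sq`): the horizontal gradient of `F` is
`(1 + |x|²/4) x + xM` with `M = ∑ t_k A_k` skew-symmetric and `M Mᵀ = |t|²`. Hence
`|∇_G U|² = ((Q-2)/4)² |x|² F^{-Q/2}` (`gradSq_Uf`), and both sides of the identity are integrals of
`F^{-Q/2}` against the weights `|x|² = (4 + |x|²) - 4` and `1`.

The integrals `∫ (4 + |x|²)^b F^{-Q/2}` for `b = 0, 1` are computed exactly (`lint_weighted`,
`weighted`) by integrating first in `t` and then in `x`, each time with the formula
`∫_{ℝᵏ} (s + |y|²)^{-p} dy = π^{k/2} Γ(p - k/2)/Γ(p) · s^{k/2 - p}` (`lint_japanese`). They are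
computed as lower Lebesgue integrals of nonnegative functions, so their finiteness is integrability. The
functional equation of `Γ` then gives `∫ |∇_G U|² = m(Q-2)/4 · ∫ U^{2Q/(Q-2)}` (`Gval_one`), and the
explicit value of `∫ U^{2Q/(Q-2)}` (`Gval_zero`) matches the constant (`Sconst_eq`).
-/


open MeasureTheory Real Filter Matrix

noncomputable section

abbrev Pt (m n : ℕ) := (Fin m → ℝ) × (Fin n → ℝ)

def IsHType (m n : ℕ) (A : Fin n → Matrix (Fin m) (Fin m) ℝ) : Prop :=
  (∀ k, (A k)ᵀ = -(A k)) ∧ (∀ k, A k * (A k)ᵀ = 1) ∧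
    ∀ i j, i ≠ j → A i * A j + A j * A i = 0

def Qh (m n : ℕ) : ℝ := m + 2 * n

def Xvf (m n : ℕ) (A : Fin n → Matrix (Fin m) (Fin m) ℝ) (j : Fin m)
    (u : Pt m n → ℝ) (p : Pt m n) : ℝ :=
  fderiv ℝ u p (Pi.single j 1, 0)
    + (1/2) * ∑ k : Fin n, (∑ i : Fin m, A k i j * p.1 i) * fderiv ℝ u p (0, Pi.single k 1)

def gradSq (m n : ℕ) (A : Fin n → Matrix (Fin m) (Fin m) ℝ)
    (u : Pt m n → ℝ) (p : Pt m n) : ℝ :=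
  ∑ j : Fin m, (Xvf m n A j u p) ^ 2

def subLap (m n : ℕ) (A : Fin n → Matrix (Fin m) (Fin m) ℝ)
    (u : Pt m n → ℝ) (p : Pt m n) : ℝ :=
  ∑ j : Fin m, Xvf m n A j (Xvf m n A j u) p

def Uf (m n : ℕ) (p : Pt m n) : ℝ :=
  ((1 + (∑ i, p.1 i ^ 2) / 4) ^ 2 + ∑ r, p.2 r ^ 2) ^ (-(Qh m n - 2) / 4)

def Sconst (m n : ℕ) : ℝ :=
  (4 : ℝ) ^ (-(2 * (n : ℝ)) / Qh m n) * ((m : ℝ) * (Qh m n - 2)) *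
    π ^ (((m : ℝ) + n) / Qh m n) *
    (Real.Gamma (((m : ℝ) + n) / 2) / Real.Gamma ((m : ℝ) + n)) ^ ((2 : ℝ) / Qh m n)

/-! ### Integrals of powers of `s + |y|²` -/

theorem lint_gamma {p s : ℝ} (hp : 0 < p) (hs : 0 < s) :
    ∫⁻ l in Set.Ioi (0:ℝ), ENNReal.ofReal (l ^ (p - 1) * exp (-(s * l)))
      = ENNReal.ofReal (Real.Gamma p * s ^ (-p)) := by
  have h := Real.integral_rpow_mul_exp_neg_mul_Ioi hp hs
  have hv : (1 / s) ^ p * Real.Gamma p = Real.Gamma p * s ^ (-p) := by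
    rw [one_div, Real.inv_rpow hs.le, Real.rpow_neg hs.le, mul_comm]
  rw [hv] at h
  have hpos : 0 < Real.Gamma p * s ^ (-p) :=
    mul_pos (Real.Gamma_pos_of_pos hp) (Real.rpow_pos_of_pos hs _)
  rw [← h, ofReal_integral_eq_lintegral_ofReal]
  · exact Integrable.of_integral_ne_zero (by rw [h]; exact hpos.ne')
  · filter_upwards [ae_restrict_mem measurableSet_Ioi] with l hl
    have : (0:ℝ) < l := hl
    simp only [Pi.zero_apply]
    positivity

theorem lint_gaussian (k : ℕ) {l : ℝ} (hl : 0 < l) :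
    ∫⁻ y : Fin k → ℝ, ENNReal.ofReal (exp (-(l * ∑ i, y i ^ 2)))
      = ENNReal.ofReal ((π / l) ^ ((k : ℝ) / 2)) := by
  have h : ∫ y : Fin k → ℝ, exp (-(l * ∑ i, y i ^ 2)) = (π / l) ^ ((k : ℝ) / 2) := by
    have h1 : ∀ y : Fin k → ℝ, exp (-(l * ∑ i, y i ^ 2)) = ∏ i, exp (-l * y i ^ 2) := by
      intro y
      rw [← Real.exp_sum, ← Finset.mul_sum, neg_mul]
    simp_rw [h1]
    rw [integral_fintype_prod_volume_eq_pow (fun z : ℝ => exp (-l * z ^ 2)), integral_gaussian,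
      Fintype.card_fin, Real.sqrt_eq_rpow, ← Real.rpow_natCast, ← Real.rpow_mul (by positivity)]
    congr 1
    ring
  have hpos : 0 < (π / l) ^ ((k : ℝ) / 2) := by positivity
  rw [← h, ofReal_integral_eq_lintegral_ofReal]
  · exact Integrable.of_integral_ne_zero (by rw [h]; exact hpos.ne')
  · exact Eventually.of_forall fun _ => (Real.exp_pos _).le

/-- Writing `(s + |y|²)^(-p)` as a Gamma integral `Γ(p)⁻¹ ∫ l^(p-1) e^{-(s+|y|²)l} dl` and
exchanging the order of integration reduces the integral over `ℝᵏ` to a Gaussian one. Keeping `s`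
general avoids all later changes of variables. -/
theorem lint_japanese (k : ℕ) {p s : ℝ} (hp : (k : ℝ) / 2 < p) (hs : 0 < s) :
    ∫⁻ y : Fin k → ℝ, ENNReal.ofReal ((s + ∑ i, y i ^ 2) ^ (-p))
      = ENNReal.ofReal (π ^ ((k : ℝ) / 2) * Real.Gamma (p - k / 2) / Real.Gamma p
          * s ^ (k / 2 - p)) := by
  have hp0 : 0 < p := lt_of_le_of_lt (by positivity) hp
  have hG := Real.Gamma_pos_of_pos hp0
  have h1 : ∀ y : Fin k → ℝ, ENNReal.ofReal ((s + ∑ i, y i ^ 2) ^ (-p))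
      = ENNReal.ofReal (Real.Gamma p)⁻¹ * ∫⁻ l in Set.Ioi (0:ℝ),
          ENNReal.ofReal (l ^ (p - 1) * exp (-((s + ∑ i, y i ^ 2) * l))) := by
    intro y
    have hy : 0 < s + ∑ i, y i ^ 2 := by positivity
    rw [lint_gamma hp0 hy, ← ENNReal.ofReal_mul (by positivity), inv_mul_cancel_left₀ hG.ne']
  simp_rw [h1]
  rw [lintegral_const_mul' _ _ ENNReal.ofReal_ne_top, lintegral_lintegral_swap (by fun_prop)]
  have h2 : ∫⁻ l in Set.Ioi (0:ℝ), ∫⁻ y : Fin k → ℝ,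
        ENNReal.ofReal (l ^ (p - 1) * exp (-((s + ∑ i, y i ^ 2) * l)))
      = ∫⁻ l in Set.Ioi (0:ℝ), ENNReal.ofReal (π ^ ((k : ℝ) / 2)) *
        ENNReal.ofReal (l ^ (p - k / 2 - 1) * exp (-(s * l))) := by
    refine setLIntegral_congr_fun measurableSet_Ioi fun l (hl : 0 < l) => ?_
    have h3 : ∀ y : Fin k → ℝ,
        ENNReal.ofReal (l ^ (p - 1) * exp (-((s + ∑ i, y i ^ 2) * l)))
        = ENNReal.ofReal (l ^ (p - 1) * exp (-(s * l))) *
          ENNReal.ofReal (exp (-(l * ∑ i, y i ^ 2))) := by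
      intro y
      rw [← ENNReal.ofReal_mul (by positivity), mul_assoc, ← Real.exp_add]
      congr 3
      ring
    simp only [h3]
    rw [lintegral_const_mul' _ _ ENNReal.ofReal_ne_top, lint_gaussian k hl,
      ← ENNReal.ofReal_mul (by positivity), ← ENNReal.ofReal_mul (by positivity),
      Real.div_rpow pi_pos.le hl.le, show p - k / 2 - 1 = (p - 1) - k / 2 by ring,
      Real.rpow_sub hl (p - 1)]
    congr 1
    ring
  rw [h2, lintegral_const_mul' _ _ ENNReal.ofReal_ne_top, lint_gamma (by linarith) hs,
    ← ENNReal.ofReal_mul (by positivity), ← ENNReal.ofReal_mul (by positivity), neg_sub]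
  congr 1
  ring

/-! ### Weighted integrals of powers of the quasi-norm -/

/-- The function `F(x,t) = (1 + |x|²/4)² + |t|²`, so that `U = F^{-(Q-2)/4}`. -/
def Ff (m n : ℕ) (p : Pt m n) : ℝ :=
  (1 + (∑ i, p.1 i ^ 2) / 4) ^ 2 + ∑ r, p.2 r ^ 2

theorem Ff_pos (m n : ℕ) (p : Pt m n) : 0 < Ff m n p := by
  unfold Ff; positivity

/-- Closed form of `∫ (4 + |x|²)^b F^{-Q/2} dx dt`, valid for `b < m/2 + n`. -/
def Gval (m n : ℕ) (b : ℝ) : ℝ :=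
  4 ^ ((m : ℝ) + n) * (π ^ ((n : ℝ) / 2) * Real.Gamma (((m : ℝ) + n) / 2) / Real.Gamma (m / 2 + n))
    * (π ^ ((m : ℝ) / 2) * Real.Gamma (m / 2 + n - b) / Real.Gamma (m + n - b)
      * 4 ^ (b - m / 2 - n))

/-- The `t`-integral is `lint_japanese` with `s = ((4 + |x|²)/4)²`; it leaves a multiple of
`(4 + |x|²)^(b-(m+n))`, whose `x`-integral is `lint_japanese` with `s = 4`. -/
theorem lint_weighted (m n : ℕ) (hm : 1 ≤ m) (b : ℝ) (hb : b < m / 2 + n) :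
    ∫⁻ p : Pt m n, ENNReal.ofReal ((4 + ∑ i, p.1 i ^ 2) ^ b * Ff m n p ^ (-Qh m n / 2))
      = ENNReal.ofReal (Gval m n b) := by
  have hm' : (1:ℝ) ≤ m := by exact_mod_cast hm
  have hn' : (0:ℝ) ≤ n := n.cast_nonneg
  have hmeas : Measurable fun p : Pt m n =>
      ENNReal.ofReal ((4 + ∑ i, p.1 i ^ 2) ^ b * Ff m n p ^ (-Qh m n / 2)) := by
    unfold Ff; fun_prop
  rw [Measure.volume_eq_prod, lintegral_prod _ hmeas.aemeasurable]
  have hG1 := Real.Gamma_pos_of_pos (show 0 < ((m : ℝ) + n) / 2 by positivity)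
  have hG2 := Real.Gamma_pos_of_pos (show 0 < (m : ℝ) / 2 + n by positivity)
  set C : ℝ := 4 ^ ((m : ℝ) + n) *
    (π ^ ((n : ℝ) / 2) * Real.Gamma (((m : ℝ) + n) / 2) / Real.Gamma (m / 2 + n)) with hC
  have h1 : ∀ x : Fin m → ℝ, ∫⁻ t : Fin n → ℝ,
      ENNReal.ofReal ((4 + ∑ i, x i ^ 2) ^ b * Ff m n (x, t) ^ (-Qh m n / 2))
      = ENNReal.ofReal C * ENNReal.ofReal ((4 + ∑ i, x i ^ 2) ^ (-((m : ℝ) + n - b))) := by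
    intro x
    have hx : 0 < 4 + ∑ i, x i ^ 2 := by positivity
    have h2 : ∀ t : Fin n → ℝ,
        ENNReal.ofReal ((4 + ∑ i, x i ^ 2) ^ b * Ff m n (x, t) ^ (-Qh m n / 2))
        = ENNReal.ofReal ((4 + ∑ i, x i ^ 2) ^ b) *
          ENNReal.ofReal ((((4 + ∑ i, x i ^ 2) / 4) ^ 2 + ∑ r, t r ^ 2)
            ^ (-((m : ℝ) / 2 + n))) := by
      intro t
      rw [← ENNReal.ofReal_mul (by positivity)]
      congr 2
      unfold Ff Qh
      congr 1
      · dsimp only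
        ring
      · ring
    simp_rw [h2]
    rw [lintegral_const_mul' _ _ ENNReal.ofReal_ne_top,
      lint_japanese n (by linarith) (by positivity), ← ENNReal.ofReal_mul (by positivity),
      ← ENNReal.ofReal_mul (by positivity)]
    congr 1
    rw [show (m : ℝ) / 2 + n - n / 2 = (m + n) / 2 by ring, ← Real.rpow_natCast _ 2,
      ← Real.rpow_mul (by positivity),
      show ((2 : ℕ) : ℝ) * ((n : ℝ) / 2 - (m / 2 + n)) = -(m + n) by push_cast; ring,
      Real.div_rpow hx.le (by norm_num), Real.rpow_neg (by norm_num : (0:ℝ) ≤ 4),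
      show -((m : ℝ) + n - b) = b + -(m + n) by ring, Real.rpow_add hx, hC]
    field_simp
  simp_rw [h1]
  rw [lintegral_const_mul' _ _ ENNReal.ofReal_ne_top,
    lint_japanese m (by linarith) (by norm_num), ← ENNReal.ofReal_mul (by positivity)]
  unfold Gval
  rw [← hC]
  congr 3
  · rw [show (m : ℝ) + n - b - m / 2 = m / 2 + n - b by ring]
  · congr 1
    ring

theorem weighted (m n : ℕ) (hm : 1 ≤ m) (b : ℝ) (hb : b < m / 2 + n) :
    Integrable (fun p : Pt m n => (4 + ∑ i, p.1 i ^ 2) ^ b * Ff m n p ^ (-Qh m n / 2)) ∧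
    ∫ p : Pt m n, (4 + ∑ i, p.1 i ^ 2) ^ b * Ff m n p ^ (-Qh m n / 2) = Gval m n b ∧
    0 < Gval m n b := by
  have h := lint_weighted m n hm b hb
  have hm' : (1:ℝ) ≤ m := by exact_mod_cast hm
  have hn' : (0:ℝ) ≤ n := n.cast_nonneg
  have hmeas : Measurable fun p : Pt m n =>
      (4 + ∑ i, p.1 i ^ 2) ^ b * Ff m n p ^ (-Qh m n / 2) := by
    unfold Ff; fun_prop
  have hnn : 0 ≤ᵐ[volume] fun p : Pt m n =>
      (4 + ∑ i, p.1 i ^ 2) ^ b * Ff m n p ^ (-Qh m n / 2) :=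
    Eventually.of_forall fun p => by
      have := Ff_pos m n p
      simp only [Pi.zero_apply]; positivity
  have hG : 0 < Gval m n b := by
    have hG1 := Real.Gamma_pos_of_pos (show 0 < ((m : ℝ) + n) / 2 by positivity)
    have hG2 := Real.Gamma_pos_of_pos (show 0 < (m : ℝ) / 2 + n by positivity)
    have hG3 := Real.Gamma_pos_of_pos (show 0 < (m : ℝ) / 2 + n - b by linarith)
    have hG4 := Real.Gamma_pos_of_pos (show 0 < (m : ℝ) + n - b by linarith)
    unfold Gval; positivity
  refine ⟨?_, ?_, hG⟩
  · rw [← lintegral_ofReal_ne_top_iff_integrable hmeas.aestronglyMeasurable hnn, h]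
    exact ENNReal.ofReal_ne_top
  · rw [integral_eq_lintegral_of_nonneg_ae hnn hmeas.aestronglyMeasurable, h,
      ENNReal.toReal_ofReal hG.le]

/-! ### Evaluation of the constants -/

/-- The left-hand side is `∫ |x|² F^{-Q/2}`; the ratio comes from `Γ(s+1) = s Γ(s)`. -/
theorem Gval_one (m n : ℕ) (hm : 1 ≤ m) (hn : 1 ≤ n) :
    Gval m n 1 - 4 * Gval m n 0 = 4 * m / (Qh m n - 2) * Gval m n 0 := by
  have hm' : (1:ℝ) ≤ m := by exact_mod_cast hm
  have hn' : (1:ℝ) ≤ n := by exact_mod_cast hn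
  have e1 := Real.Gamma_add_one (s := (m : ℝ) / 2 + n - 1) (by linarith)
  have e2 := Real.Gamma_add_one (s := (m : ℝ) + n - 1) (by linarith)
  rw [sub_add_cancel] at e1 e2
  have hG3 := Real.Gamma_pos_of_pos (show 0 < (m : ℝ) / 2 + n - 1 by linarith)
  have hG4 := Real.Gamma_pos_of_pos (show 0 < (m : ℝ) + n - 1 by linarith)
  have e3 : (4:ℝ) ^ (1 - (m : ℝ) / 2 - n) = 4 * 4 ^ (0 - (m : ℝ) / 2 - n) := by
    rw [show 1 - (m : ℝ) / 2 - n = 1 + (0 - (m : ℝ) / 2 - n) by ring,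
      Real.rpow_add (by norm_num), Real.rpow_one]
  have hQ : Qh m n - 2 = 2 * ((m : ℝ) / 2 + n - 1) := by unfold Qh; ring
  have k1 : (m : ℝ) / 2 + n - 1 ≠ 0 := by linarith
  have k2 : (m : ℝ) + n - 1 ≠ 0 := by linarith
  unfold Gval
  rw [hQ, e3, sub_zero, sub_zero, e1, e2]
  generalize Real.Gamma ((m : ℝ) / 2 + n - 1) = g1 at *
  generalize Real.Gamma ((m : ℝ) + n - 1) = g2 at *
  generalize hu : (m : ℝ) / 2 + n - 1 = u at *
  generalize hv : (m : ℝ) + n - 1 = v at *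
  have : (m : ℝ) = 2 * (v - u) := by linarith
  rw [this]
  field_simp

theorem Gval_zero (m n : ℕ) (hm : 1 ≤ m) :
    Gval m n 0 = 4 ^ ((m : ℝ) / 2) * π ^ (((m : ℝ) + n) / 2) *
      (Real.Gamma (((m : ℝ) + n) / 2) / Real.Gamma (m + n)) := by
  have hm' : (1:ℝ) ≤ m := by exact_mod_cast hm
  have hG2 := Real.Gamma_pos_of_pos (show 0 < (m : ℝ) / 2 + n by positivity)
  have h4 : (4:ℝ) ^ ((m : ℝ) / 2) = 4 ^ ((m : ℝ) + n) * 4 ^ (0 - (m : ℝ) / 2 - n) := by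
    rw [← Real.rpow_add (by norm_num)]
    congr 1
    ring
  have hp : π ^ (((m : ℝ) + n) / 2) = π ^ ((n : ℝ) / 2) * π ^ ((m : ℝ) / 2) := by
    rw [← Real.rpow_add pi_pos]
    congr 1
    ring
  unfold Gval
  rw [sub_zero, sub_zero, h4, hp]
  field_simp

/-! ### The horizontal gradient of `U` -/

theorem hasFDerivAt_Ff (m n : ℕ) (p : Pt m n) :
    HasFDerivAt (Ff m n)
      ((1 + (∑ i, p.1 i ^ 2) / 4) • (∑ i, p.1 i •
          (ContinuousLinearMap.proj (R := ℝ) (φ := fun _ : Fin m => ℝ) i).comp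
            (ContinuousLinearMap.fst ℝ (Fin m → ℝ) (Fin n → ℝ)))
        + ∑ r, (2 * p.2 r) •
          (ContinuousLinearMap.proj (R := ℝ) (φ := fun _ : Fin n => ℝ) r).comp
            (ContinuousLinearMap.snd ℝ (Fin m → ℝ) (Fin n → ℝ))) p := by
  have hx : ∀ i, HasFDerivAt (fun q : Pt m n => q.1 i ^ 2) ((2 * p.1 i) •
      (ContinuousLinearMap.proj (R := ℝ) (φ := fun _ : Fin m => ℝ) i).comp
            (ContinuousLinearMap.fst ℝ (Fin m → ℝ) (Fin n → ℝ))) p := fun i => by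
    simpa using (((ContinuousLinearMap.proj (R := ℝ) (φ := fun _ : Fin m => ℝ) i).comp
            (ContinuousLinearMap.fst ℝ (Fin m → ℝ) (Fin n → ℝ))).hasFDerivAt (x := p)).pow 2
  have ht : ∀ i, HasFDerivAt (fun q : Pt m n => q.2 i ^ 2) ((2 * p.2 i) •
      (ContinuousLinearMap.proj (R := ℝ) (φ := fun _ : Fin n => ℝ) i).comp
            (ContinuousLinearMap.snd ℝ (Fin m → ℝ) (Fin n → ℝ))) p := fun i => by
    simpa using (((ContinuousLinearMap.proj (R := ℝ) (φ := fun _ : Fin n => ℝ) i).comp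
            (ContinuousLinearMap.snd ℝ (Fin m → ℝ) (Fin n → ℝ))).hasFDerivAt (x := p)).pow 2
  have h := ((((HasFDerivAt.fun_sum (u := Finset.univ) fun i _ => hx i).mul_const
    (4⁻¹ : ℝ)).const_add 1).pow 2).add (HasFDerivAt.fun_sum (u := Finset.univ) fun i _ => ht i)
  have hF : Ff m n = fun q : Pt m n =>
      (1 + (∑ i, q.1 i ^ 2) * 4⁻¹) ^ 2 + ∑ r, q.2 r ^ 2 := by
    funext q; simp only [Ff, div_eq_mul_inv]
  rw [hF]
  refine h.congr_fderiv ?_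
  ext v
  · simp only [ContinuousLinearMap.comp_apply, ContinuousLinearMap.inl_apply,
      _root_.add_apply, _root_.smul_apply, _root_.sum_apply,
      ContinuousLinearMap.coe_fst', ContinuousLinearMap.coe_snd', ContinuousLinearMap.proj_apply,
      Finset.mul_sum, smul_eq_mul]
    congr 1
    exact Finset.sum_congr rfl fun i _ => by rw [nsmul_eq_mul]; push_cast; ring
  · simp

theorem Xvf_Uf (m n : ℕ) (A : Fin n → Matrix (Fin m) (Fin m) ℝ) (j : Fin m) (p : Pt m n) :
    Xvf m n A j (Uf m n) p = (-(Qh m n - 2) / 4) * Ff m n p ^ (-(Qh m n - 2) / 4 - 1) *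
      ((1 + (∑ i, p.1 i ^ 2) / 4) * p.1 j + (p.1 ᵥ* ∑ k, p.2 k • A k) j) := by
  have h := (hasFDerivAt_Ff m n p).rpow_const (p := -(Qh m n - 2) / 4) (Or.inl (Ff_pos m n p).ne')
  have hU : Uf m n = fun q => Ff m n q ^ (-(Qh m n - 2) / 4) := rfl
  unfold Xvf
  rw [hU, h.fderiv]
  simp only [ContinuousLinearMap.comp_apply, _root_.add_apply,
    _root_.smul_apply, _root_.sum_apply, ContinuousLinearMap.coe_fst',
    ContinuousLinearMap.coe_snd', ContinuousLinearMap.proj_apply, smul_eq_mul, Pi.single_apply,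
    Pi.zero_apply, mul_ite, mul_one, mul_zero, Finset.sum_ite_eq',
    Finset.mem_univ, if_true, Finset.sum_const_zero, add_zero, zero_add, Matrix.vecMul_sum,
    Matrix.vecMul_smul, Finset.sum_apply, Pi.smul_apply]
  rw [mul_add, Finset.mul_sum, Finset.mul_sum]
  congr 1
  refine Finset.sum_congr rfl fun k _ => ?_
  have : ∑ i, A k i j * p.1 i = (p.1 ᵥ* A k) j := by
    simp only [Matrix.vecMul, dotProduct, mul_comm]
  rw [this]
  ring

/-- The identity `|∇_G F|² = |x|² F`. With `M = ∑ t_k A_k`, the cross term vanishes because `M` is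
skew-symmetric, and `M Mᵀ = |t|²` by the H-type (Clifford) relations. -/
theorem sum_sq (m n : ℕ) (A : Fin n → Matrix (Fin m) (Fin m) ℝ) (hA : IsHType m n A)
    (p : Pt m n) :
    ∑ j, ((1 + (∑ i, p.1 i ^ 2) / 4) * p.1 j + (p.1 ᵥ* ∑ k, p.2 k • A k) j) ^ 2
      = (∑ i, p.1 i ^ 2) * Ff m n p := by
  obtain ⟨hskew, horth, hcl⟩ := hA
  obtain ⟨x, t⟩ := p
  simp only
  set M := ∑ k, t k • A k with hM
  have hMT : Mᵀ = -M := by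
    rw [hM, Matrix.transpose_sum, ← Finset.sum_neg_distrib]
    exact Finset.sum_congr rfl fun k _ => by rw [Matrix.transpose_smul, hskew, smul_neg]
  have hpair : ∀ k l, A k * (A l)ᵀ + A l * (A k)ᵀ = if k = l then (2:ℝ) • 1 else 0 := by
    intro k l
    split_ifs with h
    · rw [h, horth, two_smul]
    · rw [hskew, hskew, mul_neg, mul_neg, ← neg_add, hcl k l h, neg_zero]
  have hMM : M * Mᵀ = (∑ r, t r ^ 2) • (1 : Matrix (Fin m) (Fin m) ℝ) := by
    have e1 : M * Mᵀ = ∑ k, ∑ l, (t k * t l) • (A k * (A l)ᵀ) := by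
      simp only [hM, Matrix.transpose_sum, Matrix.transpose_smul, Finset.sum_mul_sum,
        smul_mul_smul_comm]
    have e2 : M * Mᵀ = ∑ k, ∑ l, (t k * t l) • (A l * (A k)ᵀ) := by
      rw [e1, Finset.sum_comm]
      simp only [mul_comm]
    -- The Clifford relations only control the part of `A k * (A l)ᵀ` symmetric in `k` and `l`, so
    -- the double sum is averaged with its transpose.
    have e3 : (2:ℝ) • (M * Mᵀ) = (2:ℝ) • ((∑ r, t r ^ 2) • (1 : Matrix (Fin m) (Fin m) ℝ)) := by
      rw [two_smul]
      nth_rewrite 1 [e1]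
      rw [e2]
      simp only [← Finset.sum_add_distrib, ← smul_add, hpair, smul_ite, smul_zero,
        Finset.sum_ite_eq, Finset.mem_univ, if_true]
      simp only [smul_smul, ← Finset.sum_smul]
      congr 1
      rw [Finset.mul_sum]
      exact Finset.sum_congr rfl fun k _ => by ring
    exact smul_right_injective _ (two_ne_zero (α := ℝ)) e3
  have hcross : x ⬝ᵥ (x ᵥ* M) = 0 := by
    have h1 : x ⬝ᵥ (x ᵥ* M) = -(x ⬝ᵥ (x ᵥ* M)) := by
      conv_lhs => rw [← Matrix.mulVec_transpose, hMT, Matrix.neg_mulVec, dotProduct_neg,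
        Matrix.dotProduct_mulVec, dotProduct_comm]
    linarith
  have hsq : (x ᵥ* M) ⬝ᵥ (x ᵥ* M) = (∑ r, t r ^ 2) * (x ⬝ᵥ x) := by
    conv_lhs => rw [← Matrix.mulVec_transpose M x, Matrix.dotProduct_mulVec,
      Matrix.mulVec_transpose, Matrix.vecMul_vecMul, hMM, Matrix.vecMul_smul, Matrix.vecMul_one,
      smul_dotProduct, smul_eq_mul]
  have hexp : ∀ c : ℝ, ∑ j, (c * x j + (x ᵥ* M) j) ^ 2
      = c ^ 2 * (x ⬝ᵥ x) + 2 * c * (x ⬝ᵥ (x ᵥ* M)) + (x ᵥ* M) ⬝ᵥ (x ᵥ* M) := by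
    intro c
    simp only [dotProduct, Finset.mul_sum, ← Finset.sum_add_distrib]
    exact Finset.sum_congr rfl fun j _ => by ring
  have hxx : x ⬝ᵥ x = ∑ i, x i ^ 2 := by simp only [dotProduct, sq]
  rw [hexp, hcross, hsq, hxx]
  unfold Ff
  ring

theorem gradSq_Uf (m n : ℕ) (A : Fin n → Matrix (Fin m) (Fin m) ℝ) (hA : IsHType m n A)
    (p : Pt m n) :
    gradSq m n A (Uf m n) p
      = ((Qh m n - 2) / 4) ^ 2 * ((∑ i, p.1 i ^ 2) * Ff m n p ^ (-Qh m n / 2)) := by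
  have hF := Ff_pos m n p
  unfold gradSq
  simp only [Xvf_Uf, mul_pow _ (_ + _)]
  rw [← Finset.mul_sum, sum_sq m n A hA, mul_pow, ← Real.rpow_natCast (Ff m n p ^ _) 2,
    ← Real.rpow_mul hF.le]
  have : Ff m n p ^ (-Qh m n / 2)
      = Ff m n p ^ ((-(Qh m n - 2) / 4 - 1) * (2 : ℕ)) * Ff m n p := by
    rw [← Real.rpow_add_one hF.ne']
    congr 1
    push_cast
    ring
  rw [this]
  ring

theorem Uf_pow (m n : ℕ) (hQ : 2 < Qh m n) (p : Pt m n) :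
    Uf m n p ^ (2 * Qh m n / (Qh m n - 2)) = Ff m n p ^ (-Qh m n / 2) := by
  have : Qh m n - 2 ≠ 0 := by linarith
  change (Ff m n p ^ (-(Qh m n - 2) / 4)) ^ (2 * Qh m n / (Qh m n - 2)) = _
  rw [← Real.rpow_mul (Ff_pos m n p).le]
  congr 1
  field_simp
  ring

/-! ### Extremality -/

/-- Since `Sconst` equals `m(Q-2)/4 · (∫ F^{-Q/2})^{2/Q}` and `2/Q + (Q-2)/Q = 1`, the right-hand
side of the extremality identity is linear in `∫ F^{-Q/2}`. -/
theorem Sconst_eq (m n : ℕ) (hm : 1 ≤ m) (hQ : 2 < Qh m n) :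
    Sconst m n * Gval m n 0 ^ ((Qh m n - 2) / Qh m n)
      = m * (Qh m n - 2) / 4 * Gval m n 0 := by
  have hm' : (1:ℝ) ≤ m := by exact_mod_cast hm
  have hG1 := Real.Gamma_pos_of_pos (show 0 < ((m : ℝ) + n) / 2 by positivity)
  have hG2 := Real.Gamma_pos_of_pos (show 0 < (m : ℝ) + n by positivity)
  have hQ0 : Qh m n ≠ 0 := by linarith
  have h0 : 0 < Gval m n 0 := by rw [Gval_zero m n hm]; positivity
  have hS : Sconst m n = m * (Qh m n - 2) / 4 * Gval m n 0 ^ (2 / Qh m n) := by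
    rw [Gval_zero m n hm, Real.mul_rpow (by positivity) (by positivity),
      Real.mul_rpow (by positivity) (by positivity), ← Real.rpow_mul (by norm_num),
      ← Real.rpow_mul pi_pos.le]
    have e1 : (4:ℝ) ^ ((m : ℝ) / 2 * (2 / Qh m n)) = 4 * 4 ^ (-(2 * (n : ℝ)) / Qh m n) := by
      rw [← Real.rpow_one_add' (by norm_num)]
      · congr 1
        field_simp
        unfold Qh
        ring
      · rw [show 1 + -(2 * (n : ℝ)) / Qh m n = m / Qh m n by field_simp; unfold Qh; ring]
        positivity
    have e2 : ((m : ℝ) + n) / 2 * (2 / Qh m n) = (m + n) / Qh m n := by field_simp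
    rw [e1, e2]
    unfold Sconst
    ring
  rw [hS, mul_assoc, ← Real.rpow_add h0,
    show 2 / Qh m n + (Qh m n - 2) / Qh m n = 1 by field_simp; ring, Real.rpow_one]

/-- **Theorem 1.2, extremality of U**: the integrals of `|∇_G U|²` and `U^{2Q/(Q-2)}` are
finite and positive, and `U` achieves equality in the sharp Folland–Stein inequality. -/
theorem folland_stein_extremal (m n : ℕ) (hm : 1 ≤ m) (hn : 1 ≤ n)
    (A : Fin n → Matrix (Fin m) (Fin m) ℝ) (hA : IsHType m n A) :
    Integrable (fun p : Pt m n => gradSq m n A (Uf m n) p) ∧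
    Integrable (fun p : Pt m n => Uf m n p ^ (2 * Qh m n / (Qh m n - 2))) ∧
    0 < ∫ p : Pt m n, gradSq m n A (Uf m n) p ∧
    0 < ∫ p : Pt m n, Uf m n p ^ (2 * Qh m n / (Qh m n - 2)) ∧
    ∫ p : Pt m n, gradSq m n A (Uf m n) p
      = Sconst m n *
        (∫ p : Pt m n, Uf m n p ^ (2 * Qh m n / (Qh m n - 2))) ^ ((Qh m n - 2) / Qh m n) := by
  have hm' : (1:ℝ) ≤ m := by exact_mod_cast hm
  have hn' : (1:ℝ) ≤ n := by exact_mod_cast hn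
  have hQ : 2 < Qh m n := by unfold Qh; linarith
  have hQ2 : 0 < Qh m n - 2 := by linarith
  obtain ⟨i0, v0, g0⟩ := weighted m n hm 0 (by linarith)
  obtain ⟨i1, v1, -⟩ := weighted m n hm 1 (by linarith)
  simp only [Real.rpow_zero, one_mul, Real.rpow_one] at i0 v0 i1 v1
  -- `|x|² = (4 + |x|²) - 4` splits the gradient term into the weights `b = 1` and `b = 0`.
  have hgrad : (fun p : Pt m n => gradSq m n A (Uf m n) p) = fun p =>
      ((Qh m n - 2) / 4) ^ 2 * ((4 + ∑ i, p.1 i ^ 2) * Ff m n p ^ (-Qh m n / 2)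
        - 4 * Ff m n p ^ (-Qh m n / 2)) := by
    funext p
    rw [gradSq_Uf m n A hA]
    ring
  have hval : ∫ p : Pt m n, gradSq m n A (Uf m n) p = m * (Qh m n - 2) / 4 * Gval m n 0 := by
    rw [hgrad, integral_const_mul, integral_sub i1 (i0.const_mul 4), integral_const_mul, v0, v1,
      Gval_one m n hm hn]
    field_simp
  have hpow : (fun p : Pt m n => Uf m n p ^ (2 * Qh m n / (Qh m n - 2)))
      = fun p => Ff m n p ^ (-Qh m n / 2) := funext (Uf_pow m n hQ)
  refine ⟨?_, ?_, ?_, ?_, ?_⟩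
  · rw [hgrad]
    exact (i1.sub (i0.const_mul 4)).const_mul _
  · rw [hpow]
    exact i0
  · rw [hval]
    positivity
  · rw [hpow, v0]
    exact g0
  · rw [hval, hpow, v0, Sconst_eq m n hm hQ]
end
end

section
/- (Yamabe-type equation (2.4).) The function U satisfies the partial differential equation Δ_G U + (m(Q-2)/4) · U^{(Q+2)/(Q-2)} = 0 at every point of ℝ^m × ℝ^n. -/
/-! With `f = 1 + |x|²/4` and `N = f² + |t|²` we have `U = N ^ α`, `α = -(Q-2)/4`. A direct
computation gives `X_j N = Y_j := f x_j + ∑ k, t_k (A_kᵀ x)_j`. The H-type relations say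
`⟨A_kᵀ x, A_lᵀ x⟩` is `|x|²` for `k = l` and is antisymmetric in `k ≠ l`, and skew-symmetry gives
`⟨x, A_kᵀ x⟩ = 0`; hence `∑ Y_j² = |x|² N` and `∑ X_j Y_j = (n+1)|x|²/2 + m f`. Therefore
`Δ_G U = α N^(α-1) ((α-1)|x|² + (n+1)|x|²/2 + m f) = α m N^(α-1)`, the `|x|²` terms cancelling for
this value of `α`, and `N^(α-1) = U^((Q+2)/(Q-2))`. -/

open MeasureTheory Real Filter Matrix

noncomputable section

/-- The `j`-th component of `A_kᵀ x`, the coefficient of `∂/∂t_k` in `2 X_j`. -/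
def coB (m n : ℕ) (A : Fin n → Matrix (Fin m) (Fin m) ℝ) (k : Fin n) (j : Fin m)
    (x : Fin m → ℝ) : ℝ := ∑ i, A k i j * x i

/-- The direction of the vector field `X_j` at the point `p`. -/
def dirX (m n : ℕ) (A : Fin n → Matrix (Fin m) (Fin m) ℝ) (j : Fin m) (p : Pt m n) : Pt m n :=
  (Pi.single j 1, fun k => (1/2) * coB m n A k j p.1)

/-- The factor `f = 1 + |x|²/4`. -/
def fF (m n : ℕ) (p : Pt m n) : ℝ := 1 + (∑ i, p.1 i ^ 2) / 4

/-- The base `N = f² + |t|²` of the power defining `U`. -/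
def nF (m n : ℕ) (p : Pt m n) : ℝ := fF m n p ^ 2 + ∑ r, p.2 r ^ 2

/-- The function `Y_j = X_j N`, in closed form. -/
def yF (m n : ℕ) (A : Fin n → Matrix (Fin m) (Fin m) ℝ) (j : Fin m) (p : Pt m n) : ℝ :=
  fF m n p * p.1 j + ∑ k, coB m n A k j p.1 * p.2 k

section
variable {m n : ℕ} {A : Fin n → Matrix (Fin m) (Fin m) ℝ}

lemma Xvf_eq_fderiv (j : Fin m) (u : Pt m n → ℝ) (p : Pt m n) :
    Xvf m n A j u p = fderiv ℝ u p (dirX m n A j p) := by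
  have h : dirX m n A j p = ((Pi.single j 1, 0) : Pt m n)
      + ∑ k, ((1/2) * coB m n A k j p.1) • ((0, Pi.single k 1) : Pt m n) := by
    refine Prod.ext ?_ ?_
    · simp [dirX, Prod.fst_sum]
    · funext k
      simp [dirX, Prod.snd_sum, Finset.sum_apply, Pi.single_apply]
  rw [h, map_add, map_sum]
  simp only [map_smul, smul_eq_mul, Xvf, Finset.mul_sum (Finset.univ : Finset (Fin n)), coB,
    mul_assoc]

/-- `X_j u` may be computed as a derivative along a straight line. -/
lemma Xvf_eq_of_line (j : Fin m) {u : Pt m n → ℝ} {p : Pt m n} {d : ℝ}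
    (hu : DifferentiableAt ℝ u p)
    (h : HasDerivAt (fun τ : ℝ => u (p + τ • dirX m n A j p)) d 0) : Xvf m n A j u p = d := by
  rw [Xvf_eq_fderiv]
  exact (hu.hasFDerivAt.hasLineDerivAt (dirX m n A j p)).unique h

lemma line_x (j i : Fin m) (p : Pt m n) :
    HasDerivAt (fun τ : ℝ => (p + τ • dirX m n A j p).1 i) ((Pi.single j 1 : Fin m → ℝ) i) 0 := by
  simpa [dirX] using
    ((hasDerivAt_id (0:ℝ)).mul_const ((Pi.single j 1 : Fin m → ℝ) i)).const_add (p.1 i)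

lemma line_t (j : Fin m) (k : Fin n) (p : Pt m n) :
    HasDerivAt (fun τ : ℝ => (p + τ • dirX m n A j p).2 k) ((1/2) * coB m n A k j p.1) 0 := by
  simpa [dirX] using
    ((hasDerivAt_id (0:ℝ)).mul_const ((1/2) * coB m n A k j p.1)).const_add (p.2 k)

lemma line_f (j : Fin m) (p : Pt m n) :
    HasDerivAt (fun τ : ℝ => fF m n (p + τ • dirX m n A j p)) (p.1 j / 2) 0 := by
  have h := ((HasDerivAt.fun_sum (u := Finset.univ)
    (fun i _ => (line_x (A := A) j i p).fun_pow 2)).div_const 4).const_add 1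
  refine h.congr_deriv ?_
  simp [Pi.single_apply]
  ring

/-- `X_j N = Y_j`. -/
lemma line_n (j : Fin m) (p : Pt m n) :
    HasDerivAt (fun τ : ℝ => nF m n (p + τ • dirX m n A j p)) (yF m n A j p) 0 := by
  have h := ((line_f (A := A) j p).fun_pow 2).add (HasDerivAt.fun_sum (u := Finset.univ)
    (fun k _ => (line_t (A := A) j k p).fun_pow 2))
  refine h.congr_deriv ?_
  simp only [yF, zero_smul, add_zero]
  congr 1
  · simp; ring
  · refine Finset.sum_congr rfl fun k _ => ?_
    simp; ring

/-- `X_j` annihilates `(A_kᵀ x)_j`, since its `x_j`-derivative is a diagonal entry of `A_k`. -/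
lemma line_b (hA : IsHType m n A) (j : Fin m) (k : Fin n) (p : Pt m n) :
    HasDerivAt (fun τ : ℝ => coB m n A k j (p + τ • dirX m n A j p).1) 0 0 := by
  have h := HasDerivAt.fun_sum (u := Finset.univ)
    (fun i _ => (line_x (A := A) j i p).const_mul (A k i j))
  refine h.congr_deriv ?_
  have h0 : A k j j = 0 := by
    have := congrFun (congrFun (hA.1 k) j) j
    simp only [transpose_apply, Matrix.neg_apply] at this
    linarith
  simp [Pi.single_apply, h0]

/-- The value of `X_j Y_j`. -/
lemma line_y (hA : IsHType m n A) (j : Fin m) (p : Pt m n) :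
    HasDerivAt (fun τ : ℝ => yF m n A j (p + τ • dirX m n A j p))
      (p.1 j ^ 2 / 2 + fF m n p + (1/2) * ∑ k, coB m n A k j p.1 ^ 2) 0 := by
  have h := ((line_f (A := A) j p).fun_mul (line_x (A := A) j j p)).add
    (HasDerivAt.fun_sum (u := Finset.univ)
    (fun k _ => (line_b hA j k p).fun_mul (line_t (A := A) j k p)))
  refine h.congr_deriv ?_
  simp only [zero_smul, add_zero, Pi.single_eq_same, zero_mul, zero_add, Finset.mul_sum]
  congr 1
  · ring
  · refine Finset.sum_congr rfl fun k _ => ?_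
    ring

lemma nF_pos (p : Pt m n) : 0 < nF m n p := by
  unfold nF fF
  positivity

lemma nF_diff (p : Pt m n) : DifferentiableAt ℝ (nF m n) p := by
  unfold nF fF
  fun_prop

lemma yF_diff (j : Fin m) (p : Pt m n) : DifferentiableAt ℝ (yF m n A j) p := by
  unfold yF fF coB
  fun_prop

lemma rpow_diff (a : ℝ) (p : Pt m n) : DifferentiableAt ℝ (fun q => nF m n q ^ a) p :=
  (nF_diff p).rpow_const (Or.inl (nF_pos p).ne')

lemma line_rpow (a : ℝ) (j : Fin m) (p : Pt m n) :
    HasDerivAt (fun τ : ℝ => nF m n (p + τ • dirX m n A j p) ^ a)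
      (yF m n A j p * a * nF m n p ^ (a - 1)) 0 := by
  have h := (line_n (A := A) j p).rpow_const (p := a) (Or.inl (nF_pos _).ne')
  simpa using h

lemma Xvf_rpow (a : ℝ) (j : Fin m) :
    Xvf m n A j (fun q => nF m n q ^ a)
      = fun p => yF m n A j p * a * nF m n p ^ (a - 1) :=
  funext fun p => Xvf_eq_of_line j (rpow_diff a p) (line_rpow a j p)

lemma Xvf_Xvf_rpow (hA : IsHType m n A) (a : ℝ) (j : Fin m) (p : Pt m n) :
    Xvf m n A j (Xvf m n A j (fun q => nF m n q ^ a)) p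
      = (p.1 j ^ 2 / 2 + fF m n p + (1/2) * ∑ k, coB m n A k j p.1 ^ 2) * a * nF m n p ^ (a - 1)
        + yF m n A j p ^ 2 * (a * (a - 1)) * nF m n p ^ (a - 1 - 1) := by
  rw [Xvf_rpow]
  refine Xvf_eq_of_line j (((yF_diff j p).mul_const a).mul (rpow_diff (a - 1) p)) ?_
  refine (((line_y hA j p).mul_const a).fun_mul (line_rpow (a - 1) j p)).congr_deriv ?_
  simp only [zero_smul, add_zero]
  ring

lemma coB_eq (k : Fin n) (x : Fin m → ℝ) : (fun j => coB m n A k j x) = x ᵥ* A k := by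
  funext j
  simp [coB, vecMul, dotProduct, mul_comm]

lemma sum_coB_mul (k l : Fin n) (x : Fin m → ℝ) :
    ∑ j, coB m n A k j x * coB m n A l j x = x ⬝ᵥ (A k * (A l)ᵀ) *ᵥ x := by
  have : ∑ j, coB m n A k j x * coB m n A l j x = (x ᵥ* A k) ⬝ᵥ (x ᵥ* A l) := by
    rw [← coB_eq, ← coB_eq]; rfl
  rw [this, ← mulVec_mulVec, mulVec_transpose, dotProduct_mulVec]

lemma sum_coB_sq (hA : IsHType m n A) (k : Fin n) (x : Fin m → ℝ) :
    ∑ j, coB m n A k j x ^ 2 = ∑ i, x i ^ 2 := by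
  simp only [pow_two]
  rw [sum_coB_mul, hA.2.1, one_mulVec]
  rfl

/-- The off-diagonal inner products vanish: `⟨A_kᵀ x, A_lᵀ x⟩` is symmetric in `k, l`, while
anticommutation makes it antisymmetric. -/
lemma sum_coB_ne (hA : IsHType m n A) {k l : Fin n} (hkl : k ≠ l) (x : Fin m → ℝ) :
    ∑ j, coB m n A k j x * coB m n A l j x = 0 := by
  have h1 : ∑ j, coB m n A k j x * coB m n A l j x
      = ∑ j, coB m n A l j x * coB m n A k j x := by simp only [mul_comm]
  have h2 : ∑ j, coB m n A k j x * coB m n A l j x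
      + ∑ j, coB m n A l j x * coB m n A k j x = 0 := by
    rw [sum_coB_mul, sum_coB_mul, hA.1, hA.1, ← dotProduct_add, ← add_mulVec, mul_neg, mul_neg,
      ← neg_add, hA.2.2 k l hkl]
    simp
  linarith

lemma sum_x_coB (hA : IsHType m n A) (k : Fin n) (x : Fin m → ℝ) :
    ∑ j, x j * coB m n A k j x = 0 := by
  have h1 : ∑ j, x j * coB m n A k j x = x ⬝ᵥ (x ᵥ* A k) := by rw [← coB_eq]; rfl
  have h2 : x ⬝ᵥ (x ᵥ* A k) = x ⬝ᵥ (A k *ᵥ x) := by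
    rw [dotProduct_comm, dotProduct_mulVec]
  have h3 : x ⬝ᵥ (x ᵥ* A k) = - (x ⬝ᵥ (A k *ᵥ x)) := by
    rw [← mulVec_transpose, hA.1, neg_mulVec, dotProduct_neg]
  linarith

/-- `|∇_G N|² = |x|² N`. -/
lemma sum_yF_sq (hA : IsHType m n A) (p : Pt m n) :
    ∑ j, yF m n A j p ^ 2 = (∑ i, p.1 i ^ 2) * nF m n p := by
  have hx : ∑ j, p.1 j * ∑ k, coB m n A k j p.1 * p.2 k = 0 := by
    simp only [Finset.mul_sum]
    rw [Finset.sum_comm]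
    refine Finset.sum_eq_zero fun k _ => ?_
    simp only [← mul_assoc]
    rw [← Finset.sum_mul, sum_x_coB hA, zero_mul]
  have hb : ∑ j, (∑ k, coB m n A k j p.1 * p.2 k) ^ 2
      = (∑ i, p.1 i ^ 2) * ∑ k, p.2 k ^ 2 := by
    have hsq : ∀ j, (∑ k, coB m n A k j p.1 * p.2 k) ^ 2
        = ∑ k, ∑ l, coB m n A k j p.1 * p.2 k * (coB m n A l j p.1 * p.2 l) := fun j => by
      rw [pow_two, Finset.sum_mul_sum]
    simp only [hsq]
    rw [Finset.sum_comm, Finset.mul_sum]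
    refine Finset.sum_congr rfl fun k _ => ?_
    rw [Finset.sum_comm, Finset.sum_eq_single k]
    · rw [← sum_coB_sq hA k p.1, Finset.sum_mul]
      exact Finset.sum_congr rfl fun j _ => by ring
    · intro l _ hl
      have : ∀ j, coB m n A k j p.1 * p.2 k * (coB m n A l j p.1 * p.2 l)
          = coB m n A k j p.1 * coB m n A l j p.1 * (p.2 k * p.2 l) := fun j => by ring
      simp only [this]
      rw [← Finset.sum_mul, sum_coB_ne hA hl.symm, zero_mul]
    · simp
  have : ∀ j, yF m n A j p ^ 2 = fF m n p ^ 2 * p.1 j ^ 2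
      + 2 * fF m n p * (p.1 j * ∑ k, coB m n A k j p.1 * p.2 k)
      + (∑ k, coB m n A k j p.1 * p.2 k) ^ 2 := fun j => by unfold yF; ring
  simp only [this, Finset.sum_add_distrib, ← Finset.mul_sum, hx, hb, nF]
  ring

/-- The value of `Δ_G N = ∑ X_j Y_j`. -/
lemma sum_diag (hA : IsHType m n A) (p : Pt m n) :
    ∑ j, (p.1 j ^ 2 / 2 + fF m n p + (1/2) * ∑ k, coB m n A k j p.1 ^ 2)
      = ((n : ℝ) + 1) * (∑ i, p.1 i ^ 2) / 2 + m * fF m n p := by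
  have : ∑ j, ∑ k, coB m n A k j p.1 ^ 2 = n * ∑ i, p.1 i ^ 2 := by
    rw [Finset.sum_comm]
    simp [sum_coB_sq hA]
  simp only [Finset.sum_add_distrib, ← Finset.mul_sum, this, ← Finset.sum_div]
  simp
  ring

end

/-- **Yamabe-type equation (2.4)**: `Δ_G U + (m(Q-2)/4) U^{(Q+2)/(Q-2)} = 0` everywhere. -/
theorem yamabe_equation (m n : ℕ) (hm : 1 ≤ m) (hn : 1 ≤ n)
    (A : Fin n → Matrix (Fin m) (Fin m) ℝ) (hA : IsHType m n A) (p : Pt m n) :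
    subLap m n A (Uf m n) p
      + ((m : ℝ) * (Qh m n - 2) / 4) * Uf m n p ^ ((Qh m n + 2) / (Qh m n - 2)) = 0 := by
  have hQ : Qh m n - 2 ≠ 0 := by
    have h1 : (1:ℝ) ≤ m := by exact_mod_cast hm
    have h2 : (1:ℝ) ≤ n := by exact_mod_cast hn
    unfold Qh
    linarith
  have hN := nF_pos p
  have hU : Uf m n = fun q => nF m n q ^ (-(Qh m n - 2) / 4) := rfl
  have hpow : Uf m n p ^ ((Qh m n + 2) / (Qh m n - 2))
      = nF m n p ^ (-(Qh m n - 2) / 4 - 1) := by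
    simp only [hU]
    rw [← Real.rpow_mul hN.le]
    congr 1
    field_simp
    ring
  rw [hpow, subLap, hU]
  simp only [Xvf_Xvf_rpow hA, Finset.sum_add_distrib, ← Finset.sum_mul]
  rw [← Finset.sum_add_distrib, ← Finset.sum_add_distrib, sum_diag hA, sum_yF_sq hA]
  have hs : nF m n p ^ (-(Qh m n - 2) / 4 - 1)
      = nF m n p * nF m n p ^ (-(Qh m n - 2) / 4 - 1 - 1) := by
    rw [Real.rpow_sub_one hN.ne' (-(Qh m n - 2) / 4 - 1)]
    field_simp
  rw [hs]
  unfold Qh fF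
  ring
end
end

section
/- (Hardy inequality, Lemma 2.1.) For every smooth compactly supported function u : ℝ^m × ℝ^n → ℝ, ∫ |∇_G u|² dx dt ≥ (m(Q-2)/4) ∫ u(x,t)² / ((1 + |x|²/4)² + |t|²) dx dt. -/
/-!
The inequality is a ground-state (supersolution) argument. Put `D = (1 + |x|²/4)² + |t|²` and
`α = (Q - 2)/4`. The function `D ^ (-α)` is positive and satisfies
`-Δ_G (D ^ (-α)) = m α D ^ (-α) / D`, so dividing `u` by it suggests the vector field
`F = α ∇_G D / D`, minus its logarithmic gradient. Expanding the square,

  `|∇_G u|² = |∇_G u + u F|² + (div_G F - |F|²) u² - div_G (u² F)`,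

and `div_G F - |F|² = α (Δ_G D / D - (1 + α) |∇_G D|² / D²) = m α / D`, which follows from the two
identities `|∇_G D|² = |x|² D` (`sum_Yw_sq`) and `Δ_G D = m + (Q + 2)/4 · |x|²` (`sum_Xvf_Yw`).
Both rest on the H-type condition in the form `J Jᵀ = |t|² I` for `J = ∑ t_k A_k`
(`sum_smul_mul_transpose`). The pointwise identity is `gradSq_decomp`. Since each `X_j` has zero
divergence, `div_G (u² F)` integrates to zero (`integral_Xvf`), and the square is nonnegative.
-/

open MeasureTheory Real Filter Matrix

noncomputable section

/-! ### Algebra of H-type matrices -/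

/-- For `J = ∑ t_k A_k` the H-type condition gives `J Jᵀ = |t|² I`. The off-diagonal terms cancel
after adding the double sum to itself with its two indices exchanged. -/
theorem sum_smul_mul_transpose (m n : ℕ)
    (A : Fin n → Matrix (Fin m) (Fin m) ℝ) (hA : IsHType m n A) (t : Fin n → ℝ) :
    (∑ k, t k • A k) * (∑ k, t k • A k)ᵀ = (∑ k, t k ^ 2) • (1 : Matrix (Fin m) (Fin m) ℝ) := by
  obtain ⟨h1, h2, h3⟩ := hA
  have key : ∀ k l, A k * (A l)ᵀ + A l * (A k)ᵀ
      = if k = l then (2 : ℝ) • (1 : Matrix (Fin m) (Fin m) ℝ) else 0 := by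
    intro k l
    split_ifs with h
    · subst h; rw [h2, two_smul]
    · rw [h1, h1, mul_neg, mul_neg, ← neg_add, h3 k l h, neg_zero]
  have e : (∑ k, t k • A k) * (∑ k, t k • A k)ᵀ
      = ∑ k, ∑ l, (t k * t l) • (A k * (A l)ᵀ) := by
    simp_rw [transpose_sum, Finset.sum_mul_sum, transpose_smul, smul_mul_smul_comm]
  have e' : (∑ k, t k • A k) * (∑ k, t k • A k)ᵀ
      = ∑ k, ∑ l, (t k * t l) • (A l * (A k)ᵀ) := by
    rw [e, Finset.sum_comm]
    simp_rw [mul_comm (t _) (t _)]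
  have h2J : (2 : ℝ) • ((∑ k, t k • A k) * (∑ k, t k • A k)ᵀ)
      = (2 : ℝ) • ((∑ k, t k ^ 2) • (1 : Matrix (Fin m) (Fin m) ℝ)) := by
    conv_lhs => rw [two_smul]
    nth_rewrite 1 [e]
    rw [e', ← Finset.sum_add_distrib]
    simp_rw [← Finset.sum_add_distrib, ← smul_add, key, smul_ite, smul_zero]
    simp only [Finset.sum_ite_eq, Finset.mem_univ, if_true, Finset.sum_smul, Finset.smul_sum]
    refine Finset.sum_congr rfl fun k _ => ?_
    rw [smul_comm, sq]
  exact smul_right_injective _ (two_ne_zero (α := ℝ)) h2J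

/-- `|x J|² = |t|² |x|²` for `J = ∑ t_k A_k`, written in coordinates. -/
theorem sum_sq_vecMul_smul (m n : ℕ)
    (A : Fin n → Matrix (Fin m) (Fin m) ℝ) (hA : IsHType m n A) (x : Fin m → ℝ) (t : Fin n → ℝ) :
    ∑ j, (∑ k, t k * ∑ i, A k i j * x i) ^ 2 = (∑ k, t k ^ 2) * ∑ i, x i ^ 2 := by
  have e : ∀ j, (∑ k, t k * ∑ i, A k i j * x i) = (x ᵥ* (∑ k, t k • A k)) j := by
    intro j
    simp only [vecMul, dotProduct, Matrix.sum_apply, Matrix.smul_apply, smul_eq_mul,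
      Finset.mul_sum]
    rw [Finset.sum_comm]
    refine Finset.sum_congr rfl fun i _ => Finset.sum_congr rfl fun k _ => by ring
  have e2 : ∑ j, (∑ k, t k * ∑ i, A k i j * x i) ^ 2
      = (x ᵥ* (∑ k, t k • A k)) ⬝ᵥ (x ᵥ* (∑ k, t k • A k)) := by
    simp_rw [e, sq]; rfl
  rw [e2]
  nth_rewrite 2 [← mulVec_transpose]
  rw [← dotProduct_mulVec, mulVec_mulVec, sum_smul_mul_transpose m n A hA, smul_mulVec, one_mulVec, dotProduct_smul]
  simp [dotProduct, sq]

/-- `x · (x A_k) = 0`, by skew-symmetry. -/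
theorem sum_mul_vecMul_self (m n : ℕ)
    (A : Fin n → Matrix (Fin m) (Fin m) ℝ) (hA : IsHType m n A) (x : Fin m → ℝ) (k : Fin n) :
    ∑ j, x j * ∑ i, A k i j * x i = 0 := by
  have h : ∀ i j, A k i j = - A k j i := fun i j => congrFun (congrFun (hA.1 k) j) i
  have : ∑ j, x j * ∑ i, A k i j * x i = - ∑ j, x j * ∑ i, A k i j * x i := by
    simp_rw [Finset.mul_sum, ← Finset.sum_neg_distrib]
    rw [Finset.sum_comm]
    refine Finset.sum_congr rfl fun i _ => Finset.sum_congr rfl fun j _ => ?_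
    rw [h i j]; ring
  linarith

/-- `|x A_k|² = |x|²`: the case where `t` is the `k`-th basis vector of `sum_sq_vecMul_smul`. -/
theorem sum_sq_vecMul (m n : ℕ)
    (A : Fin n → Matrix (Fin m) (Fin m) ℝ) (hA : IsHType m n A) (x : Fin m → ℝ) (k : Fin n) :
    ∑ j, (∑ i, A k i j * x i) ^ 2 = ∑ i, x i ^ 2 := by
  have := sum_sq_vecMul_smul m n A hA x (Pi.single k 1)
  simpa [Pi.single_apply] using this

/-! ### Integration by parts along the horizontal fields -/

/-- Instance search does not see through the abbreviation of `volume` on the product. -/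
theorem haar_volume (m n : ℕ) : (volume : Measure (Pt m n)).IsAddHaarMeasure :=
  Measure.prod.instIsAddHaarMeasure (volume : Measure (Fin m → ℝ)) (volume : Measure (Fin n → ℝ))

theorem integral_fderiv_zero {m n : ℕ} {g : Pt m n → ℝ} (hg : ContDiff ℝ 1 g)
    (hs : HasCompactSupport g) (v : Pt m n) : ∫ p, fderiv ℝ g p v = 0 := by
  have := haar_volume m n
  have hc : Continuous fun p => fderiv ℝ g p v :=
    (hg.continuous_fderiv one_ne_zero).clm_apply continuous_const
  have hs' : HasCompactSupport fun p => fderiv ℝ g p v := hs.fderiv_apply ℝ v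
  have := integral_mul_fderiv_eq_neg_fderiv_mul_of_integrable
    (μ := (volume : Measure (Pt m n))) (f := fun _ => (1 : ℝ)) (g := g) (v := v) (𝕜 := ℝ) (by simp)
    (by simpa using hc.integrable_of_hasCompactSupport hs')
    (by simpa using hg.continuous.integrable_of_hasCompactSupport hs)
    (fun x _ => differentiableAt_const _) (fun x _ => hg.differentiable one_ne_zero x)
  simpa using this

theorem continuous_Xvf {m n : ℕ} {A : Fin n → Matrix (Fin m) (Fin m) ℝ} {j : Fin m}
    {g : Pt m n → ℝ} (hg : ContDiff ℝ 1 g) : Continuous (Xvf m n A j g) := by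
  have := hg.continuous_fderiv one_ne_zero
  unfold Xvf
  fun_prop

theorem compactSupport_Xvf {m n : ℕ} {A : Fin n → Matrix (Fin m) (Fin m) ℝ} {j : Fin m}
    {g : Pt m n → ℝ} (hg : HasCompactSupport g) : HasCompactSupport (Xvf m n A j g) := by
  refine (hg.fderiv (𝕜 := ℝ)).mono fun p hp => ?_
  contrapose! hp
  simp only [Function.mem_support, not_not] at hp ⊢
  simp [Xvf, hp]

/-- The fields `X_j` are divergence free: the coefficient of `∂/∂t_k` depends on `x` only, so it may
be moved inside that derivative. -/
theorem integral_Xvf {m n : ℕ} {A : Fin n → Matrix (Fin m) (Fin m) ℝ} {j : Fin m}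
    {g : Pt m n → ℝ} (hg : ContDiff ℝ 1 g) (hs : HasCompactSupport g) :
    ∫ p, Xvf m n A j g p = 0 := by
  let c : Fin n → Pt m n → ℝ := fun k p => ∑ i, A k i j * p.1 i
  have hc : ∀ k, ContDiff ℝ 1 (c k) := fun k => by
    have : ∀ i, ContDiff ℝ 1 fun p : Pt m n => p.1 i := fun i => by fun_prop
    exact ContDiff.sum fun i _ => contDiff_const.mul (this i)
  have hcd : ∀ k p, fderiv ℝ (c k) p (0, Pi.single k 1) = 0 := fun k p => by
    have h1 : HasFDerivAt (c k) (∑ i, A k i j • ((ContinuousLinearMap.proj (R := ℝ) (φ := fun _ : Fin m => ℝ) i).comp (ContinuousLinearMap.fst ℝ (Fin m → ℝ) (Fin n → ℝ)))) p :=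
      HasFDerivAt.fun_sum fun i _ => ((ContinuousLinearMap.proj (R := ℝ) (φ := fun _ : Fin m => ℝ) i).comp (ContinuousLinearMap.fst ℝ (Fin m → ℝ) (Fin n → ℝ))).hasFDerivAt.const_mul (A k i j)
    rw [h1.fderiv]
    simp
  have e : ∀ p, Xvf m n A j g p = fderiv ℝ g p (Pi.single j 1, 0)
      + ∑ k, (1/2) * fderiv ℝ (fun q => c k q * g q) p (0, Pi.single k 1) := fun p => by
    rw [Xvf, Finset.mul_sum]
    congr 1
    refine Finset.sum_congr rfl fun k _ => ?_
    rw [fderiv_fun_mul ((hc k).differentiable one_ne_zero p) (hg.differentiable one_ne_zero p)]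
    simp [hcd, c]
  have hcg : ∀ k, ContDiff ℝ 1 (fun q => c k q * g q) := fun k => (hc k).mul hg
  have hcs : ∀ k, HasCompactSupport (fun q => c k q * g q) := fun k => hs.mul_left
  have := haar_volume m n
  have hint : ∀ {f : Pt m n → ℝ}, ContDiff ℝ 1 f → HasCompactSupport f → ∀ v,
      Integrable fun p => fderiv ℝ f p v := fun hf hfs v =>
    ((hf.continuous_fderiv one_ne_zero).clm_apply continuous_const).integrable_of_hasCompactSupport
      (hfs.fderiv_apply ℝ v)
  simp_rw [e]
  rw [integral_add (hint hg hs _) (integrable_finsetSum _ fun k _ => (hint (hcg k) (hcs k) _).const_mul _),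
    integral_fderiv_zero hg hs, integral_finsetSum _ fun k _ => (hint (hcg k) (hcs k) _).const_mul _]
  simp_rw [integral_const_mul, integral_fderiv_zero (hcg _) (hcs _)]
  simp

/-- The Leibniz rule for `X_j`. -/
theorem Xvf_mul {m n : ℕ} {A : Fin n → Matrix (Fin m) (Fin m) ℝ} {j : Fin m}
    {f g : Pt m n → ℝ} (hf : Differentiable ℝ f) (hg : Differentiable ℝ g) (p : Pt m n) :
    Xvf m n A j (fun q => f q * g q) p = f p * Xvf m n A j g p + g p * Xvf m n A j f p := by
  simp only [Xvf, fderiv_fun_mul (hf p) (hg p), _root_.add_apply,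
    _root_.smul_apply, smul_eq_mul, mul_add, Finset.sum_add_distrib, Finset.mul_sum]
  rw [show ∀ a b c d : ℝ, a + b + (c + d) = (a + c) + (b + d) by intros; ring]
  congr 2 <;> exact Finset.sum_congr rfl fun k _ => by ring

/-! ### Horizontal derivatives of the weight -/

/-- The denominator `D = (1 + |x|²/4)² + |t|²` of the Hardy weight. -/
def Dw (m n : ℕ) (p : Pt m n) : ℝ := (1 + (∑ i, p.1 i ^ 2) / 4) ^ 2 + ∑ r, p.2 r ^ 2

/-- The horizontal derivative `Y_j = X_j D`, in closed form (see `Xvf_Dw`). -/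
def Yw (m n : ℕ) (A : Fin n → Matrix (Fin m) (Fin m) ℝ) (j : Fin m) (p : Pt m n) : ℝ :=
  (1 + (∑ i, p.1 i ^ 2) / 4) * p.1 j + ∑ k, p.2 k * ∑ i, A k i j * p.1 i

theorem Dw_pos (m n : ℕ) (p : Pt m n) : 0 < Dw m n p := by
  have : 0 ≤ ∑ i, p.1 i ^ 2 := Finset.sum_nonneg fun i _ => sq_nonneg _
  have : 0 ≤ ∑ i, p.2 i ^ 2 := Finset.sum_nonneg fun i _ => sq_nonneg _
  unfold Dw; positivity

theorem contDiff_Dw (m n : ℕ) : ContDiff ℝ 1 (Dw m n) := by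
  have h1 : ∀ i, ContDiff ℝ 1 fun p : Pt m n => p.1 i := fun i => by fun_prop
  have h2 : ∀ i, ContDiff ℝ 1 fun p : Pt m n => p.2 i := fun i => by fun_prop
  unfold Dw; fun_prop

theorem contDiff_Yw (m n : ℕ) (A : Fin n → Matrix (Fin m) (Fin m) ℝ) (j : Fin m) :
    ContDiff ℝ 1 (Yw m n A j) := by
  have h1 : ∀ i, ContDiff ℝ 1 fun p : Pt m n => p.1 i := fun i => by fun_prop
  have h2 : ∀ i, ContDiff ℝ 1 fun p : Pt m n => p.2 i := fun i => by fun_prop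
  unfold Yw; fun_prop

/-- The coordinate `x_i` as a continuous linear functional. -/
def xc {m n : ℕ} (i : Fin m) : Pt m n →L[ℝ] ℝ :=
  (ContinuousLinearMap.proj (R := ℝ) (φ := fun _ : Fin m => ℝ) i).comp
    (ContinuousLinearMap.fst ℝ (Fin m → ℝ) (Fin n → ℝ))

/-- The coordinate `t_k` as a continuous linear functional. -/
def tc {m n : ℕ} (k : Fin n) : Pt m n →L[ℝ] ℝ :=
  (ContinuousLinearMap.proj (R := ℝ) (φ := fun _ : Fin n => ℝ) k).comp
    (ContinuousLinearMap.snd ℝ (Fin m → ℝ) (Fin n → ℝ))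

@[simp] theorem xc_apply {m n : ℕ} (i : Fin m) (p : Pt m n) : xc i p = p.1 i := rfl
@[simp] theorem tc_apply {m n : ℕ} (i : Fin n) (p : Pt m n) : tc i p = p.2 i := rfl

theorem hasFDerivAt_s {m n : ℕ} (p : Pt m n) :
    HasFDerivAt (fun q : Pt m n => 1 + (∑ i, q.1 i ^ 2) / 4)
      (∑ i, (p.1 i / 2) • (xc i : Pt m n →L[ℝ] ℝ)) p := by
  have h : ∀ i, HasFDerivAt (fun q : Pt m n => q.1 i ^ 2) ((2 * p.1 i) • (xc i : Pt m n →L[ℝ] ℝ)) p :=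
    fun i => by simpa using HasFDerivAt.pow ((xc i : Pt m n →L[ℝ] ℝ).hasFDerivAt (x := p)) 2
  have := ((HasFDerivAt.fun_sum fun i (_ : i ∈ Finset.univ) => h i).mul_const (4⁻¹ : ℝ)).const_add 1
  simp only [div_eq_mul_inv]
  refine this.congr_fderiv ?_
  rw [Finset.smul_sum]
  refine Finset.sum_congr rfl fun i _ => ?_
  rw [smul_smul]; congr 1; ring

theorem Xvf_Dw {m n : ℕ} (A : Fin n → Matrix (Fin m) (Fin m) ℝ) (j : Fin m) (p : Pt m n) :
    Xvf m n A j (Dw m n) p = Yw m n A j p := by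
  have ht : ∀ i, HasFDerivAt (fun q : Pt m n => q.2 i ^ 2) ((2 * p.2 i) • (tc i : Pt m n →L[ℝ] ℝ)) p :=
    fun i => by simpa using HasFDerivAt.pow ((tc i : Pt m n →L[ℝ] ℝ).hasFDerivAt (x := p)) 2
  have h := (HasFDerivAt.pow (hasFDerivAt_s p) 2).add (HasFDerivAt.fun_sum fun i (_ : i ∈ Finset.univ) => ht i)
  have h' : fderiv ℝ (Dw m n) p = _ := h.fderiv
  rw [Xvf, h', Yw]
  simp [Pi.single_apply, Finset.mul_sum]
  congr 1
  · ring
  · refine Finset.sum_congr rfl fun k _ => ?_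
    simp only [← Finset.mul_sum]; ring

theorem Xvf_Yw {m n : ℕ} (A : Fin n → Matrix (Fin m) (Fin m) ℝ) (hA : IsHType m n A)
    (j : Fin m) (p : Pt m n) :
    Xvf m n A j (Yw m n A j) p = 1 + (∑ i, p.1 i ^ 2) / 4 + p.1 j ^ 2 / 2
      + (1/2) * ∑ k, (∑ i, A k i j * p.1 i) ^ 2 := by
  have hd : ∀ k, A k j j = 0 := fun k => by
    have : A k j j = - A k j j := congrFun (congrFun (hA.1 k) j) j
    linarith
  have hw : ∀ k, HasFDerivAt (fun q : Pt m n => ∑ i, A k i j * q.1 i)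
      (∑ i, A k i j • (xc i : Pt m n →L[ℝ] ℝ)) p := fun k =>
    HasFDerivAt.fun_sum fun i _ => (xc i : Pt m n →L[ℝ] ℝ).hasFDerivAt.const_mul (A k i j)
  have h := ((hasFDerivAt_s p).fun_mul ((xc j : Pt m n →L[ℝ] ℝ).hasFDerivAt)).add
    (HasFDerivAt.fun_sum fun k (_ : k ∈ Finset.univ) =>
      ((tc k : Pt m n →L[ℝ] ℝ).hasFDerivAt).fun_mul (hw k))
  have h' : fderiv ℝ (Yw m n A j) p = _ := h.fderiv
  rw [Xvf, h']
  simp [Pi.single_apply, hd, sq]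
  ring

/-- `|∇_G D|² = |x|² D`. -/
theorem sum_Yw_sq {m n : ℕ} (A : Fin n → Matrix (Fin m) (Fin m) ℝ) (hA : IsHType m n A)
    (p : Pt m n) : ∑ j, Yw m n A j p ^ 2 = (∑ i, p.1 i ^ 2) * Dw m n p := by
  have hx : ∑ j, p.1 j * ∑ k, p.2 k * ∑ i, A k i j * p.1 i = 0 := by
    have e : ∑ j, p.1 j * ∑ k, p.2 k * ∑ i, A k i j * p.1 i
        = ∑ k, p.2 k * ∑ j, p.1 j * ∑ i, A k i j * p.1 i := by
      simp_rw [Finset.mul_sum]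
      rw [Finset.sum_comm]
      refine Finset.sum_congr rfl fun k _ => Finset.sum_congr rfl fun j _ =>
        Finset.sum_congr rfl fun i _ => by ring
    simp [e, sum_mul_vecMul_self m n A hA]
  have hv := sum_sq_vecMul_smul m n A hA p.1 p.2
  unfold Yw Dw
  have e : ∀ s : ℝ, ∀ a b : Fin m → ℝ, ∑ j, (s * a j + b j) ^ 2
      = s ^ 2 * ∑ j, a j ^ 2 + 2 * s * ∑ j, a j * b j + ∑ j, b j ^ 2 := fun s a b => by
    simp only [Finset.mul_sum, ← Finset.sum_add_distrib]
    exact Finset.sum_congr rfl fun j _ => by ring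
  rw [e, hv, hx]
  ring

/-- `Δ_G D = m + (Q + 2)/4 · |x|²`. -/
theorem sum_Xvf_Yw {m n : ℕ} (A : Fin n → Matrix (Fin m) (Fin m) ℝ) (hA : IsHType m n A)
    (p : Pt m n) : ∑ j, Xvf m n A j (Yw m n A j) p
      = m + (m + 2 * n + 2) / 4 * ∑ i, p.1 i ^ 2 := by
  simp_rw [Xvf_Yw A hA, Finset.sum_add_distrib, ← Finset.mul_sum, ← Finset.sum_div]
  have hc : ∑ j, ∑ k, (∑ i, A k i j * p.1 i) ^ 2 = n * ∑ i, p.1 i ^ 2 := by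
    rw [Finset.sum_comm]
    simp only [sum_sq_vecMul m n A hA]
    simp
  rw [hc]
  simp
  ring

/-! ### The ground-state decomposition and its integral -/

/-- The `X_j`-derivative of the flux `u² Y_j / D`; `w` stands for `1 / D`. -/
theorem Xvf_flux {m n : ℕ} (A : Fin n → Matrix (Fin m) (Fin m) ℝ) (j : Fin m)
    {u : Pt m n → ℝ} (hu : ContDiff ℝ 1 u) {w : Pt m n → ℝ} (hw : ContDiff ℝ 1 w)
    (hwD : ∀ p, Dw m n p * w p = 1) (p : Pt m n) :
    Xvf m n A j (fun q => (u q * u q) * (Yw m n A j q * w q)) p =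
      u p ^ 2 * Xvf m n A j (Yw m n A j) p * w p + 2 * u p * Xvf m n A j u p * Yw m n A j p * w p
        - u p ^ 2 * Yw m n A j p ^ 2 * w p ^ 2 := by
  have hud := hu.differentiable one_ne_zero
  have hwd := hw.differentiable one_ne_zero
  have hYd := (contDiff_Yw m n A j).differentiable one_ne_zero
  have hDd := (contDiff_Dw m n).differentiable one_ne_zero
  have hXw : Xvf m n A j w p = - Yw m n A j p * w p ^ 2 := by
    have h1 := Xvf_mul (A := A) (j := j) hDd hwd p
    have h0 : (fun q => Dw m n q * w q) = fun _ => 1 := funext hwD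
    rw [h0, Xvf_Dw] at h1
    have h2 : Xvf m n A j (fun _ => (1 : ℝ)) p = 0 := by simp [Xvf]
    rw [h2] at h1
    linear_combination (-w p) * h1 - Xvf m n A j w p * hwD p
  rw [Xvf_mul (hud.fun_mul hud) (hYd.fun_mul hwd), Xvf_mul hud hud, Xvf_mul hYd hwd, hXw]
  ring

/-- The ground-state decomposition: up to a divergence, `|∇_G u|²` is a sum of squares plus the Hardy
term. Here `w` stands for `1 / D`. -/
theorem gradSq_decomp {m n : ℕ} (A : Fin n → Matrix (Fin m) (Fin m) ℝ) (hA : IsHType m n A)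
    {u : Pt m n → ℝ} (hu : ContDiff ℝ 1 u) {w : Pt m n → ℝ} (hw : ContDiff ℝ 1 w)
    (hwD : ∀ p, Dw m n p * w p = 1) (p : Pt m n) :
    gradSq m n A u p =
      (∑ j, (Xvf m n A j u p + (Qh m n - 2) / 4 * (u p * Yw m n A j p * w p)) ^ 2)
      + ((m : ℝ) * (Qh m n - 2) / 4) * (u p ^ 2 * w p)
      - (Qh m n - 2) / 4 *
        ∑ j, Xvf m n A j (fun q => (u q * u q) * (Yw m n A j q * w q)) p := by
  set α := (Qh m n - 2) / 4 with hα
  have hY := sum_Yw_sq A hA p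
  have hL := sum_Xvf_Yw A hA p
  have hD := hwD p
  simp_rw [Xvf_flux A _ hu hw hwD]
  have e : ∀ j, (Xvf m n A j u p + α * (u p * Yw m n A j p * w p)) ^ 2
      = Xvf m n A j u p ^ 2 + α * (u p ^ 2 * Xvf m n A j (Yw m n A j) p * w p
        + 2 * u p * Xvf m n A j u p * Yw m n A j p * w p
        - u p ^ 2 * Yw m n A j p ^ 2 * w p ^ 2)
        - (α * u p ^ 2 * w p) * Xvf m n A j (Yw m n A j) p
        + (α * (1 + α) * u p ^ 2 * w p ^ 2) * Yw m n A j p ^ 2 := fun j => by ring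
  simp_rw [e, Finset.sum_add_distrib, Finset.sum_sub_distrib, Finset.sum_add_distrib,
    ← Finset.mul_sum]
  rw [hY, hL, gradSq]
  have hα' : α = (m + 2 * n - 2) / 4 := hα
  have hm : (m : ℝ) * (Qh m n - 2) / 4 = m * α := by rw [hα]; ring
  rw [hm]
  simp only [Finset.sum_sub_distrib, Finset.sum_add_distrib]
  generalize (∑ i, p.1 i ^ 2) = r at *
  have h1 : (1 + α) = (m + 2 * n + 2) / 4 := by rw [hα']; ring
  rw [h1]
  -- With `α + 1 = (Q + 2)/4`, the `|x|²` parts of `Δ_G D / D` and `(1 + α) |∇_G D|² / D²` cancel.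
  linear_combination (-(α * (m + 2 * n + 2) / 4 * u p ^ 2 * w p * r)) * hD

/-- **Hardy inequality (Lemma 2.1)**. -/
theorem hardy_inequality (m n : ℕ) (hm : 1 ≤ m) (hn : 1 ≤ n)
    (A : Fin n → Matrix (Fin m) (Fin m) ℝ) (hA : IsHType m n A)
    (u : Pt m n → ℝ) (hu : ContDiff ℝ (⊤ : ℕ∞) u) (hsupp : HasCompactSupport u) :
    ((m : ℝ) * (Qh m n - 2) / 4) *
        ∫ p : Pt m n, u p ^ 2 / ((1 + (∑ i, p.1 i ^ 2) / 4) ^ 2 + ∑ r, p.2 r ^ 2)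
      ≤ ∫ p : Pt m n, gradSq m n A u p := by
  have hu1 : ContDiff ℝ 1 u := hu.of_le (by exact_mod_cast le_top)
  let w : Pt m n → ℝ := fun p => (Dw m n p)⁻¹
  have hw : ContDiff ℝ 1 w := (contDiff_Dw m n).inv fun p => (Dw_pos m n p).ne'
  have hwD : ∀ p, Dw m n p * w p = 1 := fun p => mul_inv_cancel₀ (Dw_pos m n p).ne'
  have hY := fun j => contDiff_Yw m n A j
  let S : Pt m n → ℝ := fun p =>
    ∑ j, (Xvf m n A j u p + (Qh m n - 2) / 4 * (u p * Yw m n A j p * w p)) ^ 2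
  let g : Fin m → Pt m n → ℝ := fun j q => (u q * u q) * (Yw m n A j q * w q)
  have hg : ∀ j, ContDiff ℝ 1 (g j) := fun j => (hu1.mul hu1).mul ((hY j).mul hw)
  have hgs : ∀ j, HasCompactSupport (g j) := fun j => (hsupp.mul_right).mul_right
  have hX : ∀ j, Continuous (Xvf m n A j u) := fun j => continuous_Xvf hu1
  have hXs : ∀ j, HasCompactSupport (Xvf m n A j u) := fun j => compactSupport_Xvf hsupp
  have := haar_volume m n
  have iS : Integrable S := by
    refine integrable_finsetSum _ fun j _ => ?_
    have hs : HasCompactSupport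
        fun p => Xvf m n A j u p + (Qh m n - 2) / 4 * (u p * Yw m n A j p * w p) :=
      (hXs j).add (((hsupp.mul_right).mul_right).mul_left)
    have hc : Continuous
        fun p => Xvf m n A j u p + (Qh m n - 2) / 4 * (u p * Yw m n A j p * w p) :=
      (hX j).add (continuous_const.mul
        ((hu1.continuous.mul (hY j).continuous).mul hw.continuous))
    refine (hc.pow 2).integrable_of_hasCompactSupport ?_
    simpa only [Pi.pow_apply, sq] using hs.mul_right (f' := _)
  have iW : Integrable fun p => u p ^ 2 * w p := by
    refine ((hu1.continuous.pow 2).mul hw.continuous).integrable_of_hasCompactSupport ?_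
    simp only [sq]
    exact (hsupp.mul_right).mul_right
  have iX : ∀ j, Integrable (Xvf m n A j (g j)) := fun j =>
    (continuous_Xvf (hg j)).integrable_of_hasCompactSupport (compactSupport_Xvf (hgs j))
  have hdec : ∀ p, gradSq m n A u p = S p + ((m : ℝ) * (Qh m n - 2) / 4) * (u p ^ 2 * w p)
      - (Qh m n - 2) / 4 * ∑ j, Xvf m n A j (g j) p := gradSq_decomp A hA hu1 hw hwD
  have hint : ∫ p, gradSq m n A u p
      = (∫ p, S p) + ((m : ℝ) * (Qh m n - 2) / 4) * ∫ p, u p ^ 2 * w p := by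
    simp_rw [hdec]
    rw [integral_sub (iS.fun_add (iW.const_mul _)) ((integrable_finsetSum _ fun j _ => iX j).const_mul _),
      integral_add iS (iW.const_mul _), integral_const_mul, integral_const_mul,
      integral_finsetSum _ fun j _ => iX j]
    simp [integral_Xvf (hg _) (hgs _)]
  rw [hint]
  have hS : 0 ≤ ∫ p, S p :=
    integral_nonneg fun p => Finset.sum_nonneg fun j _ => sq_nonneg _
  have : ∀ p : Pt m n, u p ^ 2 / ((1 + (∑ i, p.1 i ^ 2) / 4) ^ 2 + ∑ r, p.2 r ^ 2)
      = u p ^ 2 * w p := fun p => div_eq_mul_inv _ _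
  simp_rw [this]
  linarith
end
end

section
/- (Lemma 2.2.) For every (x,t) ∈ ℝ^m × ℝ^n, ∑_{j=1}^m (∂U_{λ,η}/∂y_j |_{λ=1,η=0})² + ∑_{r=1}^n (∂U_{λ,η}/∂w_r |_{λ=1,η=0})² + (1/4)(∂U_{λ,η}/∂λ |_{λ=1,η=0})² = ((Q-2)²/16) · U(x,t)², where all partial derivatives of the family U_{λ,η}(x,t) with respect to the parameters λ, y_1,…,y_m, w_1,…,w_n are evaluated at λ = 1 and η = (y,w) = 0. -/
/-!
Write `B = 1 + |x|²/4`, `T = |t|²`, `D = B² + T` and `a = (Q-2)/4`, so that `U = D ^ (-a)`. Along each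
parameter the family is a power of a polynomial, and its derivative at the base point is
`-a D ^ (-a-1)` times

* `-(B x_j + (M x)_j)` for `y_j`, where `M = ∑ r, t_r U^(r)`;
* `-2 t_r` for `w_r`;
* `B |x|² + 4 T - 2 D` for `λ` (the last term comes from the prefactor `λ ^ (2a)`).

The H-type condition says that `M` is skew-symmetric with `M² = -T • 1`, so that `⟨x, M x⟩ = 0` and
`|M x|² = T |x|²`, and the `y_j`-terms add up to `|x|² D`. The claim reduces to the identity
`|x|² D + 4 T + (B |x|² + 4 T - 2 D)² / 4 = D²`, in which `|x|² = 4 (B - 1)`.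
-/

open MeasureTheory Real Filter Matrix

noncomputable section

/-- The translated-dilated family `U_{λ,η}` with `η = (y,w)`. -/
def Ufam (m n : ℕ) (A : Fin n → Matrix (Fin m) (Fin m) ℝ)
    (lam : ℝ) (y : Fin m → ℝ) (w : Fin n → ℝ) (p : Pt m n) : ℝ :=
  lam ^ ((Qh m n - 2) / 2) *
    ((1 + lam ^ 2 / 4 * ∑ i, (p.1 i - y i) ^ 2) ^ 2
        + lam ^ 4 * ∑ r, (p.2 r - w r - (1/2) * ∑ i, y i * ∑ k, A r i k * p.1 k) ^ 2)
      ^ (-(Qh m n - 2) / 4)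

/-- The matrix `∑ r, t_r U^(r)`, the value at `t` of the Clifford action of the centre. -/
def cliff {m n : ℕ} (A : Fin n → Matrix (Fin m) (Fin m) ℝ) (t : Fin n → ℝ) :
    Matrix (Fin m) (Fin m) ℝ := ∑ r, t r • A r

lemma cliff_transpose {m n : ℕ} {A : Fin n → Matrix (Fin m) (Fin m) ℝ} (hA : IsHType m n A)
    (t : Fin n → ℝ) : (cliff A t)ᵀ = -cliff A t := by
  simp [cliff, Matrix.transpose_sum, hA.1]

/-- The Clifford relation `M² = -|t|² • 1`: in `2 M²`, symmetrised over the two summation indices,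
the anticommutators kill every off-diagonal term. -/
lemma cliff_mul_self {m n : ℕ} {A : Fin n → Matrix (Fin m) (Fin m) ℝ} (hA : IsHType m n A)
    (t : Fin n → ℝ) : cliff A t * cliff A t = -((∑ r, t r ^ 2) • (1 : Matrix _ _ ℝ)) := by
  have hsq : ∀ r, A r * A r = -1 := fun r => by
    have h := hA.2.1 r
    rw [hA.1 r, mul_neg] at h
    rw [← h, neg_neg]
  have e : cliff A t * cliff A t = ∑ r, ∑ s, (t r * t s) • (A r * A s) := by
    simp [cliff, Finset.sum_mul_sum, smul_smul, mul_comm]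
  have e' : cliff A t * cliff A t = ∑ r, ∑ s, (t r * t s) • (A s * A r) := by
    rw [e, Finset.sum_comm]
    simp only [mul_comm]
  have h2 : cliff A t * cliff A t + cliff A t * cliff A t
      = ∑ r, (t r ^ 2) • ((-1 : Matrix (Fin m) (Fin m) ℝ) + -1) := by
    nth_rewrite 1 [e]
    rw [e', ← Finset.sum_add_distrib]
    refine Finset.sum_congr rfl fun r _ => ?_
    rw [← Finset.sum_add_distrib, Finset.sum_eq_single r]
    · rw [hsq, ← smul_add, sq]
    · intro s _ hs
      rw [← smul_add, hA.2.2 r s (Ne.symm hs), smul_zero]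
    · simp
  rw [← Finset.sum_smul] at h2
  have h3 : (2 : ℝ) • (cliff A t * cliff A t)
      = (2 : ℝ) • (-((∑ r, t r ^ 2) • (1 : Matrix _ _ ℝ))) := by
    rw [two_smul, h2, two_smul, smul_add, smul_neg]
  exact smul_right_injective _ (two_ne_zero' ℝ) h3

lemma dotProduct_cliff {m n : ℕ} {A : Fin n → Matrix (Fin m) (Fin m) ℝ} (hA : IsHType m n A)
    (t : Fin n → ℝ) (x : Fin m → ℝ) : x ⬝ᵥ (cliff A t *ᵥ x) = 0 := by
  have h : x ⬝ᵥ (cliff A t *ᵥ x) = -(x ⬝ᵥ (cliff A t *ᵥ x)) := by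
    nth_rewrite 1 [Matrix.dotProduct_mulVec, ← Matrix.mulVec_transpose, cliff_transpose hA,
      Matrix.neg_mulVec, neg_dotProduct, dotProduct_comm]
    rfl
  linarith

lemma cliff_normSq {m n : ℕ} {A : Fin n → Matrix (Fin m) (Fin m) ℝ} (hA : IsHType m n A)
    (t : Fin n → ℝ) (x : Fin m → ℝ) :
    (cliff A t *ᵥ x) ⬝ᵥ (cliff A t *ᵥ x) = (∑ r, t r ^ 2) * (x ⬝ᵥ x) := by
  rw [Matrix.dotProduct_mulVec, ← Matrix.mulVec_transpose, cliff_transpose hA, Matrix.mulVec_mulVec,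
    neg_mul, cliff_mul_self hA, neg_neg, Matrix.smul_mulVec, Matrix.one_mulVec, smul_dotProduct,
    smul_eq_mul]

lemma cliff_apply {m n : ℕ} (A : Fin n → Matrix (Fin m) (Fin m) ℝ)
    (t : Fin n → ℝ) (x : Fin m → ℝ) (j : Fin m) :
    (cliff A t *ᵥ x) j = ∑ r, t r * ∑ k, A r j k * x k := by
  rw [cliff, Matrix.sum_mulVec, Finset.sum_apply]
  simp only [Matrix.mulVec, dotProduct, Matrix.smul_apply, smul_eq_mul, mul_assoc, Finset.mul_sum]

lemma sum_sub_single_sq {k : ℕ} (x : Fin k → ℝ) (j : Fin k) (s : ℝ) :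
    ∑ i, (x i - (Pi.single j s : Fin k → ℝ) i) ^ 2 = ∑ i, x i ^ 2 - 2 * s * x j + s ^ 2 := by
  have h : ∀ i, (x i - (Pi.single j s : Fin k → ℝ) i) ^ 2
      = x i ^ 2 + if i = j then - 2 * s * x i + s ^ 2 else 0 := by
    intro i
    by_cases hi : i = j
    · subst hi; simp; ring
    · simp [hi]
  simp only [h, Finset.sum_add_distrib, Finset.sum_ite_eq', Finset.mem_univ, if_true]
  ring

lemma sum_sub_mul_sq {k : ℕ} (t c : Fin k → ℝ) (s : ℝ) :
    ∑ r, (t r - 0 - (1/2) * (s * c r)) ^ 2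
      = ∑ r, t r ^ 2 - s * (∑ r, t r * c r) + s ^ 2 / 4 * ∑ r, c r ^ 2 := by
  rw [Finset.mul_sum, Finset.mul_sum, ← Finset.sum_sub_distrib, ← Finset.sum_add_distrib]
  exact Finset.sum_congr rfl fun r _ => by ring

/-- **Lemma 2.2**: at `λ = 1`, `η = 0`,
`∑_j (∂U_{λ,η}/∂y_j)² + ∑_r (∂U_{λ,η}/∂w_r)² + (1/4)(∂U_{λ,η}/∂λ)² = ((Q-2)²/16) U²`. -/
theorem sum_of_squares_of_derivatives (m n : ℕ) (hm : 1 ≤ m) (hn : 1 ≤ n)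
    (A : Fin n → Matrix (Fin m) (Fin m) ℝ) (hA : IsHType m n A) (p : Pt m n) :
    (∑ j : Fin m, (deriv (fun s => Ufam m n A 1 (Pi.single j s) 0 p) 0) ^ 2)
      + (∑ r : Fin n, (deriv (fun s => Ufam m n A 1 0 (Pi.single r s) p) 0) ^ 2)
      + (1/4) * (deriv (fun s => Ufam m n A s 0 0 p) 1) ^ 2
      = ((Qh m n - 2) ^ 2 / 16) * Uf m n p ^ 2 := by
  obtain ⟨x, t⟩ := p
  set q : ℝ := Qh m n - 2 with hq
  set S : ℝ := ∑ i, x i ^ 2 with hS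
  set T : ℝ := ∑ r, t r ^ 2 with hT
  have hS0 : 0 ≤ S := Finset.sum_nonneg fun i _ => sq_nonneg _
  have hT0 : 0 ≤ T := Finset.sum_nonneg fun i _ => sq_nonneg _
  set D : ℝ := (1 + S / 4) ^ 2 + T with hD
  have hDpos : 0 < D := by positivity
  set E : ℝ := D ^ (-q / 4 - 1) with hE
  have hpow : D ^ (-q / 4) = E * D := by
    rw [hE, Real.rpow_sub_one hDpos.ne']
    field_simp
  have hy : ∀ j, deriv (fun s => Ufam m n A 1 (Pi.single j s) 0 (x, t)) 0
      = q / 4 * E * ((1 + S / 4) * x j + (cliff A t *ᵥ x) j) := by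
    intro j
    set c : Fin n → ℝ := fun r => ∑ k, A r j k * x k with hc
    have hf : (fun s => Ufam m n A 1 (Pi.single j s) 0 (x, t)) = fun s : ℝ =>
        ((1 + 1 / 4 * (S - 2 * s * x j + s ^ 2)) ^ 2
          + (T - s * (∑ r, t r * c r) + s ^ 2 / 4 * ∑ r, c r ^ 2)) ^ (-q / 4) := by
      funext s
      have h1 : ∀ r, ∑ i, (Pi.single j s : Fin m → ℝ) i * ∑ k, A r i k * x k = s * c r := by
        intro r
        simp [Pi.single_apply, hc]
      simp only [Ufam, Real.one_rpow, one_pow, one_mul, h1, sum_sub_single_sq, Pi.zero_apply,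
        sum_sub_mul_sq, ← hS, ← hT, ← hq]
    have hi := hasDerivAt_id (0 : ℝ)
    have hg : HasDerivAt (fun s : ℝ => (1 + 1 / 4 * (S - 2 * s * x j + s ^ 2)) ^ 2
          + (T - s * (∑ r, t r * c r) + s ^ 2 / 4 * ∑ r, c r ^ 2))
        (-((1 + S / 4) * x j + ∑ r, t r * c r)) 0 := by
      have := ((((((hi.const_mul 2).mul_const (x j)).const_sub S).add (hi.pow 2)).const_mul
        (1 / 4)).const_add 1).pow 2 |>.add (((hi.mul_const (∑ r, t r * c r)).const_sub T).add
        (((hi.pow 2).div_const 4).mul_const (∑ r, c r ^ 2)))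
      refine HasDerivAt.congr_deriv this ?_
      simp
      ring
    have h0 : (1 + 1 / 4 * (S - 2 * (0 : ℝ) * x j + 0 ^ 2)) ^ 2
          + (T - 0 * (∑ r, t r * c r) + 0 ^ 2 / 4 * ∑ r, c r ^ 2) = D := by
      rw [hD]; ring
    have := hg.rpow_const (p := -q / 4) (Or.inl (by rw [h0]; exact hDpos.ne'))
    rw [hf, this.deriv, h0, cliff_apply, ← hE]
    ring
  have hw : ∀ r, deriv (fun s => Ufam m n A 1 0 (Pi.single r s) (x, t)) 0
      = q / 4 * E * (2 * t r) := by
    intro r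
    have hf : (fun s => Ufam m n A 1 0 (Pi.single r s) (x, t)) = fun s : ℝ =>
        ((1 + S / 4) ^ 2 + (T - 2 * s * t r + s ^ 2)) ^ (-q / 4) := by
      funext s
      simp only [Ufam, Real.one_rpow, one_pow, one_mul, Pi.zero_apply, zero_mul, mul_zero, sub_zero,
        Finset.sum_const_zero, sum_sub_single_sq, ← hS, ← hT, ← hq]
      congr 3
      ring
    have hi := hasDerivAt_id (0 : ℝ)
    have hg : HasDerivAt (fun s : ℝ => (1 + S / 4) ^ 2 + (T - 2 * s * t r + s ^ 2))
        (-(2 * t r)) 0 := by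
      have := ((((hi.const_mul 2).mul_const (t r)).const_sub T).add (hi.pow 2)).const_add
        ((1 + S / 4) ^ 2)
      refine HasDerivAt.congr_deriv this ?_
      simp
    have h0 : (1 + S / 4) ^ 2 + (T - 2 * (0 : ℝ) * t r + 0 ^ 2) = D := by
      rw [hD]; ring
    have := hg.rpow_const (p := -q / 4) (Or.inl (by rw [h0]; exact hDpos.ne'))
    rw [hf, this.deriv, h0, ← hE]
    ring
  have hl : deriv (fun s => Ufam m n A s 0 0 (x, t)) 1
      = q / 4 * E * (2 * D - (1 + S / 4) * S - 4 * T) := by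
    have hf : (fun s => Ufam m n A s 0 0 (x, t)) = fun s : ℝ =>
        s ^ (q / 2) * ((1 + s ^ 2 / 4 * S) ^ 2 + s ^ 4 * T) ^ (-q / 4) := by
      funext s
      simp only [Ufam, Pi.zero_apply, zero_mul, mul_zero, sub_zero,
        Finset.sum_const_zero, ← hS, ← hT, ← hq]
    have hi := hasDerivAt_id (1 : ℝ)
    have hg : HasDerivAt (fun s : ℝ => (1 + s ^ 2 / 4 * S) ^ 2 + s ^ 4 * T)
        ((1 + S / 4) * S + 4 * T) 1 := by
      have := ((((hi.pow 2).div_const 4).mul_const S).const_add 1).pow 2 |>.add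
        ((hi.pow 4).mul_const T)
      refine HasDerivAt.congr_deriv this ?_
      simp
      ring
    have h0 : (1 + (1 : ℝ) ^ 2 / 4 * S) ^ 2 + 1 ^ 4 * T = D := by
      rw [hD]; ring
    have h1 := hg.rpow_const (p := -q / 4) (Or.inl (by rw [h0]; exact hDpos.ne'))
    have h2 := (Real.hasDerivAt_rpow_const (x := 1) (p := q / 2) (Or.inl one_ne_zero)).mul h1
    have h3 := h2.deriv
    rw [h0, ← hE, Real.one_rpow, Real.one_rpow, hpow] at h3
    rw [hf]
    refine h3.trans ?_
    ring
  have hU : Uf m n (x, t) = E * D := hpow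
  have hsum : ∑ j, ((1 + S / 4) * x j + (cliff A t *ᵥ x) j) ^ 2 = S * D := by
    have hx : x ⬝ᵥ x = S := by simp only [dotProduct, hS, sq]
    have h1 := dotProduct_cliff hA t x
    have h2 := cliff_normSq hA t x
    rw [hx, ← hT] at h2
    have h3 : ∑ j, ((1 + S / 4) * x j + (cliff A t *ᵥ x) j) ^ 2
        = (1 + S / 4) ^ 2 * (x ⬝ᵥ x) + 2 * (1 + S / 4) * (x ⬝ᵥ (cliff A t *ᵥ x))
          + (cliff A t *ᵥ x) ⬝ᵥ (cliff A t *ᵥ x) := by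
      simp only [dotProduct, Finset.mul_sum, ← Finset.sum_add_distrib]
      exact Finset.sum_congr rfl fun j _ => by ring
    rw [h3, h1, h2, hx, hD]
    ring
  have hsumw : ∑ r, (2 * t r) ^ 2 = 4 * T := by
    rw [hT, Finset.mul_sum]
    exact Finset.sum_congr rfl fun j _ => by ring
  simp only [hy, hw, hl, hU, mul_pow (q / 4 * E), ← Finset.mul_sum, hsum, hsumw]
  rw [hD]
  ring
end
end

section
/- (Identity (2.7).) For every (x,t) ∈ ℝ^m × ℝ^n, ∑_{i=1}^{m+n+1} ω_i(x,t)² = 1. -/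
/-!
Put `s = |x|²`, `τ = |t|²`, `a = 1 + s/4` and `D = a² + τ`. Since `Q > 2`, the factor
`U^{4/(Q-2)}` is `D⁻¹` (`Uf_rpow`). The first `m` coordinates form the vector
`D⁻¹ (a x + J_t x)` with `J_t = ∑ t_r A^(r)`. The H-type condition makes `J_t` skew with
`J_t² = -τ I` (`Jt_transpose`, `Jt_mul_self`), so `|a x + J_t x|² = D s` (`sum_sq_add_Jt`). What
is left is the polynomial identity `D s + 4 τ + (1 - s²/16 - τ)² = D²`.
-/

open MeasureTheory Real Filter Matrix

noncomputable section

/-- `ω_j`, `j = 1,…,m`. -/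
def om1 (m n : ℕ) (A : Fin n → Matrix (Fin m) (Fin m) ℝ) (j : Fin m) (p : Pt m n) : ℝ :=
  Uf m n p ^ (4 / (Qh m n - 2)) *
    ((1 + (∑ i, p.1 i ^ 2) / 4) * p.1 j
      + ∑ r : Fin n, ∑ i : Fin m, p.2 r * p.1 i * A r j i)

/-- `ω_{m+r}`, `r = 1,…,n`. -/
def om2 (m n : ℕ) (r : Fin n) (p : Pt m n) : ℝ :=
  2 * Uf m n p ^ (4 / (Qh m n - 2)) * p.2 r

/-- `ω_{m+n+1}`. -/
def om3 (m n : ℕ) (p : Pt m n) : ℝ :=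
  Uf m n p ^ (4 / (Qh m n - 2)) * (1 - (∑ i, p.1 i ^ 2) ^ 2 / 16 - ∑ r, p.2 r ^ 2)

/-- The matrix `J_t = ∑ r, t_r A^(r)`. -/
def Jt (m n : ℕ) (A : Fin n → Matrix (Fin m) (Fin m) ℝ) (t : Fin n → ℝ) :
    Matrix (Fin m) (Fin m) ℝ :=
  ∑ r, t r • A r

lemma Jt_transpose {m n : ℕ} {A : Fin n → Matrix (Fin m) (Fin m) ℝ} (hA : IsHType m n A)
    (t : Fin n → ℝ) : (Jt m n A t)ᵀ = -Jt m n A t := by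
  simp [Jt, Matrix.transpose_sum, hA.1]

/-- The Clifford relation `J_t² = -|t|² I`. -/
lemma Jt_mul_self {m n : ℕ} {A : Fin n → Matrix (Fin m) (Fin m) ℝ} (hA : IsHType m n A)
    (t : Fin n → ℝ) : Jt m n A t * Jt m n A t = -((∑ r, t r ^ 2) • 1) := by
  obtain ⟨h1, h2, h3⟩ := hA
  have hsq : ∀ k, A k * A k = -1 := fun k => by
    have := h2 k
    rw [h1, mul_neg] at this
    rw [← this, neg_neg]
  have hanti : ∀ i j, A i * A j + A j * A i = if i = j then (-2 : ℝ) • 1 else 0 := by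
    intro i j
    split_ifs with h
    · subst h
      rw [hsq, neg_smul, two_smul, neg_add]
    · exact h3 i j h
  have e1 : Jt m n A t * Jt m n A t = ∑ i, ∑ j, (t i * t j) • (A i * A j) := by
    simp only [Jt, Finset.sum_mul, Finset.mul_sum, smul_mul_smul_comm]
    exact Finset.sum_comm
  have e2 : Jt m n A t * Jt m n A t = ∑ i, ∑ j, (t i * t j) • (A j * A i) := by
    rw [e1, Finset.sum_comm]
    exact Finset.sum_congr rfl fun i _ => Finset.sum_congr rfl fun j _ => by rw [mul_comm]
  -- Averaging the two orders of summation leaves only anticommutators, hence only `i = j`.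
  have e3 : (2 : ℝ) • (Jt m n A t * Jt m n A t) = (2 : ℝ) • -((∑ r, t r ^ 2) • 1) := by
    rw [two_smul]
    nth_rewrite 1 [e1]
    rw [e2]
    simp only [← Finset.sum_add_distrib, ← smul_add, hanti, smul_ite, smul_zero,
      Finset.sum_ite_eq, Finset.mem_univ, if_true, smul_smul, ← Finset.sum_smul, ← smul_neg]
    rw [← Finset.sum_mul, smul_neg, ← neg_smul]
    congr 1
    simp only [pow_two]
    ring
  exact smul_right_injective _ (two_ne_zero (α := ℝ)) e3

/-- As `J_t` is skew, `J_t x ⊥ x`; with `J_t² = -|t|² I` also `|J_t x|² = |t|² |x|²`.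
Pythagoras then gives `|a x + J_t x|² = (a² + |t|²) |x|²`. -/
lemma sum_sq_add_Jt {m n : ℕ} {A : Fin n → Matrix (Fin m) (Fin m) ℝ} (hA : IsHType m n A)
    (t : Fin n → ℝ) (x : Fin m → ℝ) (a : ℝ) :
    ∑ j, (a * x j + (Jt m n A t *ᵥ x) j) ^ 2 = (a ^ 2 + ∑ r, t r ^ 2) * ∑ i, x i ^ 2 := by
  have hskew : ∀ y, y ⬝ᵥ (Jt m n A t *ᵥ x) = -((Jt m n A t *ᵥ y) ⬝ᵥ x) := fun y => by
    rw [Matrix.dotProduct_mulVec, ← Matrix.mulVec_transpose, Jt_transpose hA,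
      Matrix.neg_mulVec, neg_dotProduct]
  have horth : x ⬝ᵥ (Jt m n A t *ᵥ x) = 0 := by
    have h := hskew x
    rw [dotProduct_comm (Jt m n A t *ᵥ x) x] at h
    linarith
  have hnorm : (Jt m n A t *ᵥ x) ⬝ᵥ (Jt m n A t *ᵥ x) = (∑ r, t r ^ 2) * (x ⬝ᵥ x) := by
    rw [hskew, Matrix.mulVec_mulVec, Jt_mul_self hA, Matrix.neg_mulVec, neg_dotProduct, neg_neg,
      Matrix.smul_mulVec, Matrix.one_mulVec, smul_dotProduct, smul_eq_mul]
  have hx : ∑ i, x i ^ 2 = x ⬝ᵥ x := by simp only [dotProduct, pow_two]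
  have hexp : ∑ j, (a * x j + (Jt m n A t *ᵥ x) j) ^ 2 = a ^ 2 * (x ⬝ᵥ x)
      + 2 * a * (x ⬝ᵥ (Jt m n A t *ᵥ x)) + (Jt m n A t *ᵥ x) ⬝ᵥ (Jt m n A t *ᵥ x) := by
    simp only [dotProduct, Finset.mul_sum, ← Finset.sum_add_distrib]
    exact Finset.sum_congr rfl fun j _ => by ring
  rw [hexp, horth, hnorm, hx]
  ring

lemma Uf_rpow {m n : ℕ} (hm : 1 ≤ m) (hn : 1 ≤ n) (p : Pt m n) :
    Uf m n p ^ (4 / (Qh m n - 2)) = ((1 + (∑ i, p.1 i ^ 2) / 4) ^ 2 + ∑ r, p.2 r ^ 2)⁻¹ := by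
  have hQ : Qh m n - 2 ≠ 0 := by
    have h1 : (1 : ℝ) ≤ m := by exact_mod_cast hm
    have h2 : (1 : ℝ) ≤ n := by exact_mod_cast hn
    unfold Qh
    intro h
    linarith
  rw [Uf, ← Real.rpow_mul (by positivity), ← Real.rpow_neg_one]
  congr 1
  field_simp

/-- **Identity (2.7)**: `∑_{i=1}^{m+n+1} ω_i(x,t)² = 1`. -/
theorem omega_sum_of_squares (m n : ℕ) (hm : 1 ≤ m) (hn : 1 ≤ n)
    (A : Fin n → Matrix (Fin m) (Fin m) ℝ) (hA : IsHType m n A) (p : Pt m n) :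
    (∑ j : Fin m, om1 m n A j p ^ 2) + (∑ r : Fin n, om2 m n r p ^ 2) + om3 m n p ^ 2
      = 1 := by
  have hJ : ∀ j, ∑ r : Fin n, ∑ i : Fin m, p.2 r * p.1 i * A r j i
      = (Jt m n A p.2 *ᵥ p.1) j := fun j => by
    simp only [Jt, Matrix.mulVec, dotProduct, Matrix.sum_apply, Matrix.smul_apply, smul_eq_mul,
      Finset.sum_mul]
    rw [Finset.sum_comm]
    exact Finset.sum_congr rfl fun i _ => Finset.sum_congr rfl fun r _ => by ring
  simp only [om1, om2, om3, Uf_rpow hm hn, hJ, mul_pow, ← Finset.mul_sum, sum_sq_add_Jt hA]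
  have hs : 0 ≤ ∑ i, p.1 i ^ 2 := by positivity
  have ht : 0 ≤ ∑ r, p.2 r ^ 2 := by positivity
  generalize ∑ i, p.1 i ^ 2 = s at *
  generalize ∑ r, p.2 r ^ 2 = τ at *
  have hD : (1 + s / 4) ^ 2 + τ ≠ 0 := by positivity
  field_simp
  ring
end
end
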